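/- Let (A, m) be a complete Noetherian local ring and let M, M′ be nonzero finitely generated A-modules such that: for some integer j, H^i_m(M) = 0 for all i ≠ j and H^j_m(M) is an injective A-module; and for some integer j′, H^i_m(M′) = 0 for all i ≠ j′ and H^{j′}_m(M′) is an injective A-module. Then Ext^i_A(M, M′) = 0 for all i > 0, and Hom_A(M, M′) is a free A-module of finite positive rank. In particular, End_A(M) is a free A-module of rank r² for some integer r ≥ 1. -/

import Mathlib

/-!
Write `k = A / m`. A module whose local cohomology is an injective module placed in the single degree
`j` has `Ext^i(k, M) = 0` for `i ≠ j`. By dimension shifting along embeddings into injective modules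
without `m`-power torsion one reduces to `j = 0`; there the torsion of `M` is injective, hence splits
off, and the complement has no local cohomology at all (`ext_vanish_of_lc`). Mathlib defines local
cohomology through the derived functors `Ext`, whereas long exact sequences are available for
`Abelian.Ext`; the two are compared naturally in `oldNew`.

Let `r` and `r'` be the dimensions of `Ext^j(k, M)` and `Ext^j'(k, M')`. As `Ext^i(k, M)` vanishes for
`i > j`, so does `Ext^i(A / J, M)` for every ideal `J` (`ext_cyclic_vanish`). This forces the existence
of a sequence of length `j` in `m` which is regular both on `A` and on `M` (`Stage.exists_regular`,
`Stage.step`), and the ideal `I` which it generates is then `m`-primary (`Stage.finite_length`). It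
also forces `j = j'`.

Let `N = M / I M`, a module of finite length `r · length(A / I)`. The functor `Ext^j(-, M')` is exact on
modules of finite length and multiplies lengths by `r'`. Hence `Ext^j(N, M')` has length
`r' r · length(A / I)`, while it is generated by the `r' r` elements lifting a basis of `Ext^j` of the
socle of `N`. It is killed by `I`, so it is isomorphic to `(A / I) ^ (r' r)` (`Stage.base`). Removing
the elements of the regular sequence one at a time, Nakayama's lemma shows that if
`Ext^i(N / x N, M')` is concentrated in degree `s + 1` and free there over `A / (I + x)`, then
`Ext^i(N, M')` is concentrated in degree `s` and free over `A / I` of the same rank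
(`Concl.descend`). At the end, `Hom(M, M')` is free of rank `r' r` over `A`, and the higher `Ext^i(M, M')`
vanish.
-/

/-!
STATEMENT 9: Let `(A, m)` be a complete Noetherian local ring and let `M`, `M'` be
nonzero finitely generated `A`-modules such that: for some `j`, `H^i_m(M) = 0` for all
`i ≠ j` and `H^j_m(M)` is injective; and for some `j'`, `H^i_m(M') = 0` for all `i ≠ j'`
and `H^{j'}_m(M')` is injective.  Then `Ext^i_A(M, M') = 0` for all `i > 0`, and
`Hom_A(M, M')` is a free `A`-module of finite positive rank.  In particular, `End_A(M)`
is a free `A`-module of rank `r²` for some integer `r ≥ 1`.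
-/

universe u

open CategoryTheory

/-- `Ext^i_R(X, Y)` vanishes. -/
noncomputable def extVanishes (R : Type u) [CommRing R] (X Y : Type u)
    [AddCommGroup X] [Module R X] [AddCommGroup Y] [Module R Y] (i : ℕ) : Prop :=
  Subsingleton
    ↥(((Ext R (ModuleCat.{u} R) i).obj (Opposite.op (ModuleCat.of R X))).obj
      (ModuleCat.of R Y))

/-! ### `Ext` of modules and its long exact sequences -/

section ExtTools
variable {A : Type u} [CommRing A]

/-- `Ext^i_A(P, Y)` for modules, as an `A`-module. -/
noncomputable abbrev EE (A : Type u) [CommRing A] (P Y : Type u) [AddCommGroup P] [Module A P]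
    [AddCommGroup Y] [Module A Y] (i : ℕ) : Type u :=
  Abelian.Ext (ModuleCat.of A P) (ModuleCat.of A Y) i

variable {P Q R Y : Type u} [AddCommGroup P] [Module A P] [AddCommGroup Q] [Module A Q]
  [AddCommGroup R] [Module A R] [AddCommGroup Y] [Module A Y]

/-- Contravariant functoriality of `Ext`. -/
noncomputable def eMap (Y : Type u) [AddCommGroup Y] [Module A Y] (i : ℕ) (f : P →ₗ[A] Q) :
    EE A Q Y i →ₗ[A] EE A P Y i :=
  (Abelian.Ext.mk₀ (ModuleCat.ofHom f)).precompOfLinear A (ModuleCat.of A Y) (zero_add i)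

/-- Covariant functoriality of `Ext`. -/
noncomputable def eCov (X : Type u) [AddCommGroup X] [Module A X] (i : ℕ) (f : P →ₗ[A] Q) :
    EE A X P i →ₗ[A] EE A X Q i :=
  (Abelian.Ext.mk₀ (ModuleCat.ofHom f)).postcompOfLinear A (ModuleCat.of A X) (add_zero i)

lemma eMap_comp (i : ℕ) (f : P →ₗ[A] Q) (g : Q →ₗ[A] R) (x : EE A R Y i) :
    eMap Y i (g.comp f) x = eMap Y i f (eMap Y i g x) := by
  simp [eMap]

lemma eMap_id (i : ℕ) (x : EE A P Y i) : eMap Y i LinearMap.id x = x := by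
  simp [eMap]

lemma eMap_add (i : ℕ) (f g : P →ₗ[A] Q) (x : EE A Q Y i) :
    eMap Y i (f + g) x = eMap Y i f x + eMap Y i g x := by
  simp [eMap, Abelian.Ext.mk₀_add]

lemma eMap_smul (i : ℕ) (a : A) (f : P →ₗ[A] Q) (x : EE A Q Y i) :
    eMap Y i (a • f) x = a • eMap Y i f x := by
  have : ModuleCat.ofHom (a • f) = a • ModuleCat.ofHom f := rfl
  simp [eMap, this, Abelian.Ext.mk₀_smul]

lemma eCov_smul (i : ℕ) (a : A) (f : P →ₗ[A] Q) (x : EE A Y P i) :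
    eCov Y i (a • f) x = a • eCov Y i f x := by
  have : ModuleCat.ofHom (a • f) = a • ModuleCat.ofHom f := rfl
  simp [eCov, this, Abelian.Ext.mk₀_smul]

lemma eCov_comp (i : ℕ) (f : P →ₗ[A] Q) (g : Q →ₗ[A] R) (x : EE A Y P i) :
    eCov Y i (g.comp f) x = eCov Y i g (eCov Y i f x) := by
  simp [eCov]

lemma eCov_id (i : ℕ) (x : EE A Y P i) : eCov Y i LinearMap.id x = x := by
  simp [eCov]

/-- The two functorialities of `Ext` commute. -/
lemma eMap_eCov {X : Type u} [AddCommGroup X] [Module A X] (i : ℕ) (f : P →ₗ[A] Q) (g : X →ₗ[A] Y)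
    (x : EE A Q X i) : eMap Y i f (eCov Q i g x) = eCov P i g (eMap X i f x) := by
  simp [eCov, eMap]

lemma eMap_lsmul (i : ℕ) (a : A) (x : EE A P Y i) :
    eMap Y i (LinearMap.lsmul A P a) x = a • x := by
  have : LinearMap.lsmul A P a = a • LinearMap.id := by ext; simp
  rw [this, eMap_smul, eMap_id]

lemma eCov_lsmul (i : ℕ) (a : A) (x : EE A Y P i) :
    eCov Y i (LinearMap.lsmul A P a) x = a • x := by
  have : LinearMap.lsmul A P a = a • LinearMap.id := by ext; simp
  rw [this, eCov_smul, eCov_id]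

/-- `Ext^0 = Hom`. -/
noncomputable def eHom : EE A P Y 0 ≃ₗ[A] (P →ₗ[A] Y) :=
  (Abelian.Ext.linearEquiv₀ (R := A)).trans ModuleCat.homLinearEquiv

lemma shortExact_of (f : P →ₗ[A] Q) (g : Q →ₗ[A] R) (hf : Function.Injective f)
    (hg : Function.Surjective g) (h : Function.Exact f g) :
    (ModuleCat.shortComplexOfCompEqZero f g h.linearMap_comp_eq_zero).ShortExact :=
  ModuleCat.shortComplex_shortExact _ h hf hg

/-- The contravariant long exact sequence of `Ext`. -/
lemma les_contra (Y : Type u) [AddCommGroup Y] [Module A Y] (f : P →ₗ[A] Q) (g : Q →ₗ[A] R)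
    (hf : Function.Injective f)
    (hg : Function.Surjective g) (h : Function.Exact f g) (i : ℕ) :
    Function.Exact (eMap Y i g) (eMap Y i f) ∧
    ∃ δ : EE A P Y i →ₗ[A] EE A R Y (i+1), Function.Exact (eMap Y i f) δ ∧
      Function.Exact δ (eMap Y (i+1) g) := by
  have S := shortExact_of f g hf hg h
  refine ⟨?_, S.extClass.precompOfLinear A (ModuleCat.of A Y) (add_comm 1 i), ?_, ?_⟩
  · have := (Abelian.Ext.contravariant_sequence_exact₂' S (ModuleCat.of A Y) i)
    rw [ShortComplex.ab_exact_iff_function_exact] at this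
    exact this
  · have := (Abelian.Ext.contravariant_sequence_exact₁' S (ModuleCat.of A Y) i (i+1) (add_comm 1 i))
    rw [ShortComplex.ab_exact_iff_function_exact] at this
    exact this
  · have := (Abelian.Ext.contravariant_sequence_exact₃' S (ModuleCat.of A Y) i (i+1) (add_comm 1 i))
    rw [ShortComplex.ab_exact_iff_function_exact] at this
    exact this

/-- The covariant long exact sequence of `Ext`. -/
lemma les_cov (X : Type u) [AddCommGroup X] [Module A X] (f : P →ₗ[A] Q) (g : Q →ₗ[A] R)
    (hf : Function.Injective f)
    (hg : Function.Surjective g) (h : Function.Exact f g) (i : ℕ) :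
    Function.Exact (eCov X i f) (eCov X i g) ∧
    ∃ δ : EE A X R i →ₗ[A] EE A X P (i+1), Function.Exact (eCov X i g) δ ∧
      Function.Exact δ (eCov X (i+1) f) := by
  have S := shortExact_of f g hf hg h
  refine ⟨?_, S.extClass.postcompOfLinear A (ModuleCat.of A X) rfl, ?_, ?_⟩
  · have := (Abelian.Ext.covariant_sequence_exact₂' (ModuleCat.of A X) S i)
    rw [ShortComplex.ab_exact_iff_function_exact] at this
    exact this
  · have := (Abelian.Ext.covariant_sequence_exact₃' (ModuleCat.of A X) S i (i+1) rfl)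
    rw [ShortComplex.ab_exact_iff_function_exact] at this
    exact this
  · have := (Abelian.Ext.covariant_sequence_exact₁' (ModuleCat.of A X) S i (i+1) rfl)
    rw [ShortComplex.ab_exact_iff_function_exact] at this
    exact this

lemma eMap_zero_injective (f : P →ₗ[A] Q) (hf : Function.Surjective f) :
    Function.Injective (eMap Y 0 f) := by
  have : Epi (ModuleCat.ofHom f) := (ModuleCat.epi_iff_surjective _).2 hf
  exact Abelian.Ext.precomp_mk₀_injective_of_epi (ModuleCat.of A Y) (ModuleCat.ofHom f)

lemma eCov_zero_injective (f : P →ₗ[A] Q) (hf : Function.Injective f) :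
    Function.Injective (eCov Y 0 f) := by
  have : Mono (ModuleCat.ofHom f) := (ModuleCat.mono_iff_injective _).2 hf
  exact Abelian.Ext.postcomp_mk₀_injective_of_mono (ModuleCat.of A Y) (ModuleCat.ofHom f)

/-- `Ext` is invariant under isomorphism in the first variable. -/
noncomputable def eCongr (e : P ≃ₗ[A] Q) (i : ℕ) : EE A Q Y i ≃ₗ[A] EE A P Y i :=
  LinearEquiv.ofLinearMap (eMap Y i e.toLinearMap) (eMap Y i e.symm.toLinearMap)
    (by ext1 x; simp [← eMap_comp, eMap_id]) (by ext1 x; simp [← eMap_comp, eMap_id])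

/-- `Ext` is invariant under isomorphism in the second variable. -/
noncomputable def eCongrR (e : P ≃ₗ[A] Q) (i : ℕ) : EE A Y P i ≃ₗ[A] EE A Y Q i :=
  LinearEquiv.ofLinearMap (eCov Y i e.toLinearMap) (eCov Y i e.symm.toLinearMap)
    (by ext1 x; simp [← eCov_comp, eCov_id]) (by ext1 x; simp [← eCov_comp, eCov_id])

instance EE.finite [IsNoetherianRing A] [Module.Finite A P] [Module.Finite A Y] (i : ℕ) :
    Module.Finite A (EE A P Y i) := ModuleCat.finite_ext A _ _ i

/-- A scalar killing `P` kills `Ext^i(P, Y)`. -/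
lemma ext_smul_eq_zero_left {a : A} (h : ∀ p : P, a • p = 0) (i : ℕ) (x : EE A P Y i) :
    a • x = 0 := by
  rw [← eMap_lsmul]
  have : LinearMap.lsmul A P a = 0 := by ext; simp [h]
  simp [this, eMap]

lemma subsingleton_ext_of_subsingleton [Subsingleton P] (i : ℕ) : Subsingleton (EE A P Y i) := by
  refine subsingleton_of_forall_eq 0 fun x => ?_
  simpa using ext_smul_eq_zero_left (a := (1 : A)) (fun p : P => Subsingleton.elim _ _) i x

lemma subsingleton_ext_of_projective [Module.Projective A P] (i : ℕ) :
    Subsingleton (EE A P Y (i+1)) := by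
  have : Projective (ModuleCat.of A P) := (IsProjective.iff_projective P).1 inferInstance
  exact Abelian.Ext.subsingleton_of_projective _ _ _

lemma subsingleton_ext_of_injective [Module.Injective A Y] (i : ℕ) :
    Subsingleton (EE A P Y (i+1)) := by
  have := Module.injective_object_of_injective_module A Y
  exact Abelian.Ext.subsingleton_of_injective _ _ _
end ExtTools

/-! ### Comparison of the two definitions of `Ext` -/

section Bridge
open HomologicalComplex
variable {A : Type u} [CommRing A] {X X' Y : ModuleCat.{u} A}

/-- The degree `i` term of the complex `Hom(K, Y)` is the module of morphisms `K_i ⟶ Y`. -/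
noncomputable def yonHom (K : ChainComplex (ModuleCat.{u} A) ℕ) (Y : ModuleCat.{u} A) (i : ℕ) :
    ((K.linearYonedaObj A Y).X i) ≃ₗ[A] (K.X i ⟶ Y) :=
  LinearEquiv.refl A (K.X i ⟶ Y)

lemma yon_d (K : ChainComplex (ModuleCat.{u} A) ℕ) (i j : ℕ)
    (f : (K.linearYonedaObj A Y).X i) :
    yonHom K Y j (((K.linearYonedaObj A Y).d i j).hom f) = K.d j i ≫ yonHom K Y i f := by
  rfl

/-- The chain map on `Hom(-, Y)` induced by a chain map. -/
noncomputable def yonMap (Y : ModuleCat.{u} A) {K L : ChainComplex (ModuleCat.{u} A) ℕ} (φ : K ⟶ L) :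
    L.linearYonedaObj A Y ⟶ K.linearYonedaObj A Y :=
  (unopFunctor _ _).map
    (((((linearYoneda A (ModuleCat.{u} A)).obj Y).rightOp.mapHomologicalComplex _).map φ)).op

lemma yonMap_f {K L : ChainComplex (ModuleCat.{u} A) ℕ} (φ : K ⟶ L) (i : ℕ)
    (f : (L.linearYonedaObj A Y).X i) :
    yonHom K Y i (((yonMap Y φ).f i).hom f) = φ.f i ≫ yonHom L Y i f := by
  rfl

/-- Two commutative squares, one of which has isomorphisms as vertical maps, combine into a third
one. Stated in a general category so that it applies without unfolding derived functors. -/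
lemma comm_aux {C : Type*} [Category* C] {X₁ X₂ B₁ B₂ D₁ D₂ : C} (e : X₁ ⟶ X₂) (p₁ : X₁ ⟶ B₁)
    (p₂ : X₂ ⟶ B₂) (h : B₁ ⟶ B₂) (q₁ : D₁ ≅ B₁) (q₂ : D₂ ≅ B₂) (k : D₁ ⟶ D₂)
    (h₁ : e ≫ p₂ = p₁ ≫ h) (h₂ : q₁.hom ≫ h = k ≫ q₂.hom) :
    e ≫ p₂ ≫ q₂.inv = (p₁ ≫ q₁.inv) ≫ k := by
  rw [reassoc_of% h₁, Category.assoc]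
  congr 1
  rw [Iso.eq_inv_comp, reassoc_of% h₂, Iso.hom_inv_id, Category.comp_id]

/-- The computation of `Ext` by a projective resolution is natural with respect to a morphism
of resolutions. -/
lemma isoExt_nat (P : ProjectiveResolution X) (P' : ProjectiveResolution X') (g : X' ⟶ X)
    (φ : ProjectiveResolution.Hom P' P g) (n : ℕ) :
    (((Ext A (ModuleCat.{u} A) n).map g.op).app Y) ≫ (P'.isoExt (R := A) n Y).hom =
      (P.isoExt (R := A) n Y).hom ≫ homologyMap (yonMap Y φ.hom) n := by
  have h1 := ProjectiveResolution.isoLeftDerivedObj_inv_naturality g P' P φ.hom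
    (by have := φ.hom_f_zero_comp_π_f_zero; simpa using this) (((linearYoneda A (ModuleCat.{u} A)).obj Y).rightOp) n
  have h2 := homologyOp_hom_naturality (yonMap Y φ.hom) n
  exact comm_aux (((Ext A (ModuleCat.{u} A) n).map g.op).app Y)
    (P.isoLeftDerivedObj ((linearYoneda A (ModuleCat.{u} A)).obj Y).rightOp n).inv.unop
    (P'.isoLeftDerivedObj ((linearYoneda A (ModuleCat.{u} A)).obj Y).rightOp n).inv.unop
    (homologyMap ((((linearYoneda A (ModuleCat.{u} A)).obj Y).rightOp.mapHomologicalComplex _).map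
        φ.hom) n).unop
    ((P.complex.linearYonedaObj A Y).homologyOp n).unop
    ((P'.complex.linearYonedaObj A Y).homologyOp n).unop
    (homologyMap (yonMap Y φ.hom) n)
    (congrArg Quiver.Hom.unop h1) (congrArg Quiver.Hom.unop h2)

lemma smul_extMk (P : ProjectiveResolution X) {n : ℕ} (a : A) (f : P.complex.X n ⟶ Y) (m : ℕ)
    (hm : n + 1 = m) (hf : P.complex.d m n ≫ f = 0) :
    a • P.extMk f m hm hf = P.extMk (a • f) m hm (by simp [hf]) := by
  have h := P.extMk_comp_mk₀ f m hm hf (a • 𝟙 Y)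
  rw [Abelian.Ext.mk₀_smul] at h
  simpa using h

/-- An `n`-cocycle of `Hom(K, Y)`, seen as a morphism `K_n ⟶ Y`. -/
noncomputable def cyc (K : ChainComplex (ModuleCat.{u} A) ℕ) (Y : ModuleCat.{u} A) (n : ℕ) :
    (K.linearYonedaObj A Y).cycles n →ₗ[A] (K.X n ⟶ Y) :=
  (yonHom K Y n).toLinearMap.comp ((K.linearYonedaObj A Y).iCycles n).hom

lemma cyc_comp (K : ChainComplex (ModuleCat.{u} A) ℕ) (n : ℕ)
    (z : (K.linearYonedaObj A Y).cycles n) :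
    K.d (n+1) n ≫ cyc K Y n z = 0 := by
  rw [cyc, LinearMap.comp_apply, LinearEquiv.coe_coe, ← yon_d]
  have : (K.linearYonedaObj A Y).iCycles n ≫ (K.linearYonedaObj A Y).d n (n+1) = 0 := iCycles_d _ _ _
  have := congrArg (fun f => f.hom z) this
  simp only [ModuleCat.hom_comp, LinearMap.comp_apply] at this
  rw [this]; simp

lemma cyc_inj (K : ChainComplex (ModuleCat.{u} A) ℕ) (n : ℕ) :
    Function.Injective (cyc K Y n) :=
  (yonHom K Y n).injective.comp ((ModuleCat.mono_iff_injective _).1 inferInstance)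

/-- Conversely, a morphism vanishing on boundaries comes from a cocycle. The lift is found by
testing the complex against the free module `A`. -/
lemma mem_cyc (K : ChainComplex (ModuleCat.{u} A) ℕ) (n : ℕ) (f : K.X n ⟶ Y)
    (hf : K.d (n+1) n ≫ f = 0) : ∃ z, cyc K Y n z = f := by
  let k : ModuleCat.of A A ⟶ (K.linearYonedaObj A Y).X n :=
    ModuleCat.ofHom (LinearMap.toSpanSingleton A ((K.linearYonedaObj A Y).X n) ((yonHom K Y n).symm f))
  have hk1 : k.hom (1 : A) = (yonHom K Y n).symm f :=
    LinearMap.toSpanSingleton_apply_one A ((K.linearYonedaObj A Y).X n) _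
  have hk : k ≫ (K.linearYonedaObj A Y).d n (n+1) = 0 := by
    apply ModuleCat.hom_ext
    refine LinearMap.ext_ring ?_
    apply (yonHom K Y (n+1)).injective
    rw [ModuleCat.hom_comp, LinearMap.comp_apply, hk1, yon_d]
    simpa using hf
  refine ⟨((K.linearYonedaObj A Y).liftCycles k (n+1) (by simp) hk).hom (1 : A), ?_⟩
  have := congrArg (fun f => f.hom (1:A)) ((K.linearYonedaObj A Y).liftCycles_i k (n+1) (by simp) hk)
  simp only [ModuleCat.hom_comp, LinearMap.comp_apply] at this
  rw [cyc, LinearMap.comp_apply, this, hk1]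
  simp

/-- A cocycle in `Hom(P, Y)` gives a class in `Ext`. -/
noncomputable def cycMk (P : ProjectiveResolution X) (Y : ModuleCat.{u} A) (n : ℕ) :
    (P.complex.linearYonedaObj A Y).cycles n →ₗ[A] (Abelian.Ext X Y n) where
  toFun z := P.extMk (cyc P.complex Y n z) (n+1) rfl (cyc_comp P.complex n z)
  map_add' x y := by
      rw [P.add_extMk]; congr 1; exact map_add _ _ _
  map_smul' a x := by
      rw [RingHom.id_apply, smul_extMk]; congr 1; exact map_smul _ _ _

lemma cycMk_apply (P : ProjectiveResolution X) (n : ℕ)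
    (z : (P.complex.linearYonedaObj A Y).cycles n) :
    cycMk P Y n z = P.extMk (cyc P.complex Y n z) (n+1) rfl (cyc_comp P.complex n z) := rfl

lemma cycMk_surj (P : ProjectiveResolution X) (n : ℕ) : Function.Surjective (cycMk P Y n) := by
  intro x
  obtain ⟨f, hf, rfl⟩ := P.extMk_surjective x (n+1) rfl
  obtain ⟨z, hz⟩ := mem_cyc P.complex n f hf
  refine ⟨z, ?_⟩
  rw [cycMk_apply]; congr 1

lemma pi_surj (K : CochainComplex (ModuleCat.{u} A) ℕ) (n : ℕ) :
    Function.Surjective (K.homologyπ n).hom := (ModuleCat.epi_iff_surjective _).1 inferInstance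

lemma pi_exact (K : CochainComplex (ModuleCat.{u} A) ℕ) (i n : ℕ) (hi : (ComplexShape.up ℕ).prev n = i) :
    Function.Exact (K.toCycles i n).hom (K.homologyπ n).hom := by
  have h := ShortComplex.exact_of_g_is_cokernel
    (ShortComplex.mk _ _ (K.toCycles_comp_homologyπ i n)) (K.homologyIsCokernel i n hi)
  rw [ShortComplex.ShortExact.moduleCat_exact_iff_function_exact] at h
  exact h

/-- The classes of coboundaries are exactly the trivial ones. -/
lemma cycMk_eq_zero_iff (P : ProjectiveResolution X) (n : ℕ)
    (z : (P.complex.linearYonedaObj A Y).cycles n) :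
    cycMk P Y n z = 0 ↔ ((P.complex.linearYonedaObj A Y).homologyπ n).hom z = 0 := by
  rw [cycMk_apply]
  rcases n with _ | n
  · have hpi : ((P.complex.linearYonedaObj A Y).homologyπ 0).hom z = 0 ↔ z = 0 := by
      rw [pi_exact _ 0 0 (by simp)]
      have : (P.complex.linearYonedaObj A Y).toCycles 0 0 = 0 :=
        (P.complex.linearYonedaObj A Y).toCycles_eq_zero (by simp)
      rw [this]
      simp [eq_comm]
    rw [hpi, ← (cyc_inj P.complex 0).eq_iff, map_zero]
    constructor
    · intro h
      rw [← P.extEquivCohomologyClass.apply_eq_iff_eq, P.extEquivCohomologyClass_extMk,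
        P.extEquivCohomologyClass_zero, CochainComplex.HomComplex.CohomologyClass.mk_eq_zero_iff,
        CochainComplex.HomComplex.Cocycle.toSingleMk_mem_coboundaries_iff _ _ _ _ _ 1 (by lia)] at h
      obtain ⟨g, hg⟩ := h
      have h0 : P.cochainComplex.d (-(0:ℕ)) 1 = 0 :=
        (CochainComplex.isZero_of_isStrictlyLE _ 0 1 (by lia)).eq_of_tgt _ _
      rw [h0] at hg
      rw [← cancel_epi (P.cochainComplexXIso (-(0:ℕ)) 0 rfl).hom]
      simpa using hg.symm
    · intro h
      simp only [h, P.extMk_zero]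
  · have key : ∀ g, cyc P.complex Y (n+1) (((P.complex.linearYonedaObj A Y).toCycles n (n+1)).hom g)
        = P.complex.d (n+1) n ≫ yonHom P.complex Y n g := by
      intro g
      have := congrArg (fun f => f.hom g) ((P.complex.linearYonedaObj A Y).toCycles_i n (n+1))
      simp only [ModuleCat.hom_comp, LinearMap.comp_apply] at this
      rw [cyc, LinearMap.comp_apply, this]; rfl
    rw [P.extMk_eq_zero_iff _ _ _ _ n rfl, pi_exact _ n (n+1) (by simp)]
    constructor
    · rintro ⟨g, hg⟩
      refine ⟨(yonHom P.complex Y n).symm g, cyc_inj _ _ ?_⟩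
      rw [key, ← hg]; simp
    · rintro ⟨g, hg⟩
      refine ⟨yonHom P.complex Y n g, ?_⟩
      rw [← hg, key]

/-- The comparison isomorphism from homology of `Hom(P, Y)` to `Ext`. -/
noncomputable def homMk (P : ProjectiveResolution X) (Y : ModuleCat.{u} A) (n : ℕ) :
    (P.complex.linearYonedaObj A Y).homology n ≃ₗ[A] (Abelian.Ext X Y n) :=
  ((LinearMap.quotKerEquivOfSurjective _ (pi_surj _ n)).symm.trans
    (Submodule.quotEquivOfEq _ _ (by
      ext z; exact (cycMk_eq_zero_iff P n z).symm))).trans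
    (LinearMap.quotKerEquivOfSurjective (cycMk P Y n) (cycMk_surj P n))

lemma homMk_apply (P : ProjectiveResolution X) (Y : ModuleCat.{u} A) (n : ℕ)
    (z : (P.complex.linearYonedaObj A Y).cycles n) :
    homMk P Y n (((P.complex.linearYonedaObj A Y).homologyπ n).hom z) = cycMk P Y n z := by
  have : (LinearMap.quotKerEquivOfSurjective _ (pi_surj (P.complex.linearYonedaObj A Y) n)).symm
      (((P.complex.linearYonedaObj A Y).homologyπ n).hom z) = Submodule.Quotient.mk z := by
    rw [LinearEquiv.symm_apply_eq]; rfl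
  simp only [homMk, LinearEquiv.trans_apply, this]
  rfl

/-- Naturality of the comparison. -/
lemma homMk_nat (P : ProjectiveResolution X) (P' : ProjectiveResolution X') (g : X' ⟶ X)
    (φ : ProjectiveResolution.Hom P' P g) (n : ℕ) (x : (P.complex.linearYonedaObj A Y).homology n) :
    homMk P' Y n ((homologyMap (yonMap Y φ.hom) n).hom x) =
      (Abelian.Ext.mk₀ g).comp (homMk P Y n x) (zero_add _) := by
  obtain ⟨z, rfl⟩ := pi_surj _ _ x
  have h1 := congrArg (fun f => f.hom z) (homologyπ_naturality (yonMap Y φ.hom) n)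
  have h2 := congrArg (fun f => f.hom z) (cyclesMap_i (yonMap Y φ.hom) n)
  simp only [ModuleCat.hom_comp, LinearMap.comp_apply] at h1 h2
  rw [h1, homMk_apply, homMk_apply, cycMk_apply, cycMk_apply,
    ProjectiveResolution.mk₀_comp_extMk _ _ _ _ φ]
  congr 1

/-- `Ext` as a left derived functor of `Hom(-, Y)ᵒᵖ` agrees with `Ext` as morphisms in the
derived category. -/
noncomputable def oldNew (n : ℕ) (X Y : ModuleCat.{u} A) :
    ↥(((Ext A (ModuleCat.{u} A) n).obj (Opposite.op X)).obj Y) ≃ₗ[A] Abelian.Ext X Y n :=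
  ((projectiveResolution X).isoExt (R := A) n Y).toLinearEquiv.trans
    (homMk (projectiveResolution X) Y n)

/-- The comparison is natural in the first variable, so that the colimits defining local
cohomology can be computed with `Abelian.Ext`. -/
lemma oldNew_nat (n : ℕ) (g : X' ⟶ X) (x : ((Ext A (ModuleCat.{u} A) n).obj (Opposite.op X)).obj Y) :
    oldNew n X' Y ((((Ext A (ModuleCat.{u} A) n).map g.op).app Y).hom x) =
      (Abelian.Ext.mk₀ g).comp (oldNew n X Y x) (zero_add _) := by
  let φ : ProjectiveResolution.Hom (projectiveResolution X') (projectiveResolution X) g :=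
    ⟨ProjectiveResolution.lift g _ _, by
      have := ProjectiveResolution.lift_commutes_zero g (projectiveResolution X')
        (projectiveResolution X)
      simpa using this⟩
  have h := congrArg (fun f => f.hom x) (isoExt_nat (Y := Y) _ _ g φ n)
  simp only [ModuleCat.hom_comp, LinearMap.comp_apply] at h
  simp only [oldNew, LinearEquiv.trans_apply]
  rw [← homMk_nat _ _ g φ]
  exact congrArg _ h

end Bridge

/-! ### Local cohomology as a colimit of `Ext` modules -/

section LocalCohomology
variable {A : Type u} [CommRing A] (m : Ideal A)
variable {M N P : Type u} [AddCommGroup M] [Module A M] [AddCommGroup N] [Module A N]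
  [AddCommGroup P] [Module A P]

/-- The transition map `A / m ^ k → A / m ^ n`. -/
def trMap {n k : ℕ} (h : n ≤ k) : (A ⧸ m ^ k) →ₗ[A] (A ⧸ m ^ n) :=
  Submodule.mapQ _ _ LinearMap.id (Ideal.pow_le_pow_right h)

lemma trMap_surjective {n k : ℕ} (h : n ≤ k) : Function.Surjective (trMap m h) := by
  intro x
  obtain ⟨x, rfl⟩ := Submodule.Quotient.mk_surjective _ x
  exact ⟨Submodule.Quotient.mk x, rfl⟩

lemma trMap_comp {n k l : ℕ} (h : n ≤ k) (h' : k ≤ l) :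
    (trMap m h).comp (trMap m h') = trMap m (h.trans h') := by
  ext; rfl

/-- `L` is a colimit of the system `n ↦ Ext^i(A / m ^ n, M)`, that is, a model of `H^i_m(M)`. -/
def IsLC (M : Type u) [AddCommGroup M] [Module A M] (i : ℕ) (L : Type u) [AddCommGroup L]
    [Module A L] : Prop :=
  ∃ ι : ∀ n : ℕ, EE A (A ⧸ m ^ n) M i →ₗ[A] L,
    (∀ n k (h : n ≤ k) x, ι k (eMap M i (trMap m h) x) = ι n x) ∧
    (∀ y, ∃ n x, ι n x = y) ∧
    (∀ n x, ι n x = 0 → ∃ k, ∃ h : n ≤ k, eMap M i (trMap m h) x = 0)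

/-- The colimit of the system `n ↦ Ext^i(A / m ^ n, M)` vanishes. -/
def VanLC (M : Type u) [AddCommGroup M] [Module A M] (i : ℕ) : Prop :=
  ∀ n (x : EE A (A ⧸ m ^ n) M i), ∃ k, ∃ h : n ≤ k, eMap M i (trMap m h) x = 0

lemma IsLC.van {i : ℕ} {L : Type u} [AddCommGroup L] [Module A L] (h : IsLC m M i L)
    [Subsingleton L] : VanLC m M i := by
  obtain ⟨ι, -, -, h⟩ := h
  exact fun n x => h n x (Subsingleton.elim _ _)

/-- Elements of a sequential colimit of modules, when the system is identified with a system
`G` having transition maps `t`. -/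
lemma colimit_elements {D : ℕᵒᵖᵒᵖ ⥤ ModuleCat.{u} A} {c : Limits.Cocone D}
    (hc : Limits.IsColimit c)
    (G : ℕ → Type u) [∀ n, AddCommGroup (G n)] [∀ n, Module A (G n)]
    (t : ∀ n k : ℕ, n ≤ k → G n →ₗ[A] G k)
    (e : ∀ n, D.obj (Opposite.op (Opposite.op n)) ≃ₗ[A] G n)
    (het : ∀ (n k : ℕ) (h : Opposite.op (Opposite.op n) ⟶ Opposite.op (Opposite.op k)) (hh : n ≤ k)
      (x : D.obj (Opposite.op (Opposite.op n))), e k ((D.map h).hom x) = t n k hh (e n x)) :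
    ∃ ι : ∀ n : ℕ, G n →ₗ[A] c.pt,
    (∀ n k (h : n ≤ k) x, ι k (t n k h x) = ι n x) ∧
    (∀ y, ∃ n x, ι n x = y) ∧
    (∀ n x, ι n x = 0 → ∃ k, ∃ h : n ≤ k, t n k h x = 0) := by
  have : Limits.PreservesFilteredColimitsOfSize.{0, 0} (forget (ModuleCat.{u} A)) :=
    Limits.preservesSmallestFilteredColimits_of_preservesFilteredColimits.{u, u} _
  let o (n : ℕ) : ℕᵒᵖᵒᵖ := Opposite.op (Opposite.op n)
  have hto : ∀ {n k : ℕ}, n ≤ k → Nonempty (o n ⟶ o k) := fun h => ⟨(homOfLE h).op.op⟩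
  have hof : ∀ {n k : ℕ}, (o n ⟶ o k) → n ≤ k := fun h => leOfHom h.unop.unop
  let κ (n : ℕ) : D.obj (o n) →ₗ[A] c.pt := (c.ι.app (o n)).hom
  refine ⟨fun n => (κ n).comp (e n).symm.toLinearMap, ?_, ?_, ?_⟩
  · intro n k h x
    obtain ⟨x, rfl⟩ := (e n).surjective x
    obtain ⟨g⟩ := hto h
    have h1 : κ k ((D.map g).hom x) = κ n x := congrArg (fun f => f.hom x) (c.w g)
    rw [← het n k g h]
    simpa using h1
  · intro y
    obtain ⟨s, x, hx⟩ := Limits.Concrete.isColimit_exists_rep D hc y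
    refine ⟨s.unop.unop, e _ x, ?_⟩
    have hx' : κ s.unop.unop x = y := hx
    simpa using hx'
  · intro n x hx
    obtain ⟨x, rfl⟩ := (e n).surjective x
    have hx' : κ n x = κ n 0 := by simpa using hx
    obtain ⟨s, f, g, hfg⟩ := (Limits.Concrete.isColimit_rep_eq_iff_exists D hc _ _).1 hx'
    have hf : n ≤ s.unop.unop := hof f
    have hfg' : (D.map f).hom x = (D.map g).hom 0 := hfg
    refine ⟨s.unop.unop, hf, ?_⟩
    rw [← het n s.unop.unop f hf]
    have : (D.map f).hom x = 0 := hfg'.trans (map_zero _)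
    exact (congrArg (e s.unop.unop) this).trans (map_zero _)

/-- Mathlib's local cohomology satisfies the elementwise description `IsLC`. -/
lemma isLC_localCohomology (M : Type u) [AddCommGroup M] [Module A M] (i : ℕ) :
    IsLC m M i ((localCohomology m i).obj (ModuleCat.of A M)) := by
  let D := localCohomology.diagram (localCohomology.idealPowersDiagram m) i
  let E := (evaluation (ModuleCat.{u} A) (ModuleCat.{u} A)).obj (ModuleCat.of A M)
  have hc := Limits.isColimitOfPreserves E (Limits.colimit.isColimit D)
  exact colimit_elements hc (fun n => EE A (A ⧸ m ^ n) M i) (fun n k h => eMap M i (trMap m h))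
    (fun n => oldNew i _ _) (fun n k h hh x => oldNew_nat i (ModuleCat.ofHom (trMap m hh)) x)

end LocalCohomology

/-! ### Torsion and dimension shifting -/

section LC2
variable {A : Type u} [CommRing A] (m : Ideal A)
variable {M N P Q R : Type u} [AddCommGroup M] [Module A M] [AddCommGroup N] [Module A N]
  [AddCommGroup P] [Module A P] [AddCommGroup Q] [Module A Q] [AddCommGroup R] [Module A R]

/-- The connecting map of the covariant long exact sequence. -/
noncomputable def eDel (X : Type u) [AddCommGroup X] [Module A X] {f : P →ₗ[A] Q} {g : Q →ₗ[A] R}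
    (hf : Function.Injective f) (hg : Function.Surjective g) (h : Function.Exact f g) (i : ℕ) :
    EE A X R i →ₗ[A] EE A X P (i+1) :=
  (shortExact_of f g hf hg h).extClass.postcompOfLinear A (ModuleCat.of A X) rfl

/-- The connecting maps commute with the contravariant functoriality of `Ext`, hence with the
transition maps of the systems `n ↦ Ext^i(A / m ^ n, -)`. -/
lemma eDel_nat {X X' : Type u} [AddCommGroup X] [Module A X] [AddCommGroup X'] [Module A X']
    {f : P →ₗ[A] Q} {g : Q →ₗ[A] R}
    (hf : Function.Injective f) (hg : Function.Surjective g) (h : Function.Exact f g) (i : ℕ)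
    (t : X' →ₗ[A] X) (x : EE A X R i) :
    eMap P (i+1) t (eDel X hf hg h i x) = eDel X' hf hg h i (eMap R i t x) := by
  exact (Abelian.Ext.comp_assoc _ _ _ (zero_add i) rfl (by lia)).symm

/-- If the middle term is injective and receives no nonzero map from `X`, the connecting map is
bijective in every degree, including degree `0`. -/
lemma eDel_bijective (X : Type u) [AddCommGroup X] [Module A X] {f : P →ₗ[A] Q} {g : Q →ₗ[A] R}
    (hf : Function.Injective f) (hg : Function.Surjective g) (h : Function.Exact f g)
    [Module.Injective A Q] (hX : Subsingleton (X →ₗ[A] Q)) (i : ℕ) :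
    Function.Bijective (eDel X hf hg h i) := by
  have S := shortExact_of f g hf hg h
  have h0 : ∀ i, Subsingleton (EE A X Q i) := by
    rintro (_ | i)
    · exact (eHom (A := A)).toEquiv.subsingleton
    · exact subsingleton_ext_of_injective i
  have e1 : Function.Exact (eCov X i g) (eDel X hf hg h i) := by
    have := (Abelian.Ext.covariant_sequence_exact₃' (ModuleCat.of A X) S i (i+1) rfl)
    rw [ShortComplex.ab_exact_iff_function_exact] at this
    exact this
  have e2 : Function.Exact (eDel X hf hg h i) (eCov X (i+1) f) := by
    have := (Abelian.Ext.covariant_sequence_exact₁' (ModuleCat.of A X) S i (i+1) rfl)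
    rw [ShortComplex.ab_exact_iff_function_exact] at this
    exact this
  constructor
  · rw [injective_iff_map_eq_zero]
    intro x hx
    obtain ⟨y, rfl⟩ := (e1 x).1 hx
    rw [(h0 i).elim y 0, map_zero]
  · intro y
    exact (e2 y).1 ((h0 (i+1)).elim _ _)

/-- The submodule of elements annihilated by a power of `m`. -/
def gam (M : Type u) [AddCommGroup M] [Module A M] : Submodule A M where
  carrier := {v | ∃ n, ∀ a ∈ m ^ n, a • v = 0}
  zero_mem' := ⟨0, by simp⟩
  add_mem' := by
    rintro v w ⟨n, hn⟩ ⟨k, hk⟩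
    refine ⟨n + k, fun a ha => ?_⟩
    rw [smul_add, hn a (Ideal.pow_le_pow_right (by lia) ha),
      hk a (Ideal.pow_le_pow_right (by lia) ha), add_zero]
  smul_mem' := by
    rintro a v ⟨n, hn⟩
    exact ⟨n, fun b hb => by rw [smul_comm, hn b hb, smul_zero]⟩

lemma mem_gam {v : M} : v ∈ gam m M ↔ ∃ n, ∀ a ∈ m ^ n, a • v = 0 := Iff.rfl

lemma hom_mem_gam (n : ℕ) (f : (A ⧸ m ^ n) →ₗ[A] M) (x) : f x ∈ gam m M := by
  refine ⟨n, fun a ha => ?_⟩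
  obtain ⟨x, rfl⟩ := Submodule.Quotient.mk_surjective _ x
  rw [← map_smul, ← Submodule.Quotient.mk_smul, (Submodule.Quotient.mk_eq_zero _).2, map_zero]
  exact Ideal.mul_mem_right _ _ ha

lemma subsingleton_hom_of_gam (h : gam m M = ⊥) (n : ℕ) : Subsingleton ((A ⧸ m ^ n) →ₗ[A] M) := by
  refine subsingleton_of_forall_eq 0 fun f => LinearMap.ext fun x => ?_
  have := hom_mem_gam m n f x
  rwa [h, Submodule.mem_bot] at this

lemma subsingleton_hom_of_gam' (h : gam m M = ⊥) : Subsingleton ((A ⧸ m) →ₗ[A] M) := by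
  have := subsingleton_hom_of_gam m h 1
  rwa [pow_one] at this

/-- The linear map `A / I → M` with `1 ↦ v`. -/
def quotSpan {I : Ideal A} {v : M} (h : ∀ a ∈ I, a • v = 0) : (A ⧸ I) →ₗ[A] M :=
  Submodule.liftQ I (LinearMap.toSpanSingleton A M v) (fun a ha => by simpa using h a ha)

lemma quotSpan_mk {I : Ideal A} {v : M} (h : ∀ a ∈ I, a • v = 0) (a : A) :
    quotSpan h (Submodule.Quotient.mk a) = a • v := rfl

/-- If `H^0_m(M) = 0` then `M` has no `m`-power torsion. -/
lemma gam_eq_bot_of_van (h : VanLC m M 0) : gam m M = ⊥ := by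
  rw [eq_bot_iff]
  rintro v ⟨n, hn⟩
  obtain ⟨k, hk, h0⟩ := h n ((eHom (A := A)).symm (quotSpan hn))
  have h1 := eMap_zero_injective (trMap m hk) (trMap_surjective m hk) (h0.trans (map_zero _).symm)
  have h2 : quotSpan hn = 0 := by simpa using h1
  have h3 := LinearMap.congr_fun h2 (Submodule.Quotient.mk 1)
  rw [quotSpan_mk, one_smul] at h3
  exact h3

/-- Vanishing of local cohomology passes to direct summands. -/
lemma VanLC.summand {i : ℕ} (h : VanLC m M i) (s : Q →ₗ[A] M) (p : M →ₗ[A] Q)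
    (hps : p.comp s = LinearMap.id) : VanLC m Q i := by
  intro n x
  obtain ⟨k, hk, h0⟩ := h n (eCov _ i s x)
  refine ⟨k, hk, ?_⟩
  rw [eMap_eCov] at h0
  have := congrArg (eCov _ i p) h0
  rwa [← eCov_comp, hps, eCov_id, map_zero] at this

/-- Dimension shifting: `H^i_m(R) = H^(i+1)_m(P)` for an exact sequence `0 → P → Q → R → 0` with
`Q` injective and without `m`-power torsion. -/
lemma IsLC.shift {f : P →ₗ[A] Q} {g : Q →ₗ[A] R}
    (hf : Function.Injective f) (hg : Function.Surjective g) (h : Function.Exact f g)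
    [Module.Injective A Q] (hQ : gam m Q = ⊥) (i : ℕ)
    {L : Type u} [AddCommGroup L] [Module A L] (hL : IsLC m P (i+1) L) : IsLC m R i L := by
  obtain ⟨ι, h1, h2, h3⟩ := hL
  have hb := fun n => eDel_bijective (A ⧸ m ^ n) hf hg h (subsingleton_hom_of_gam m hQ n) i
  refine ⟨fun n => (ι n).comp (eDel _ hf hg h i), ?_, ?_, ?_⟩
  · intro n k hk x
    rw [LinearMap.comp_apply, ← eDel_nat, h1]; rfl
  · intro y
    obtain ⟨n, x, rfl⟩ := h2 y
    obtain ⟨x, rfl⟩ := (hb n).2 x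
    exact ⟨n, x, rfl⟩
  · intro n x hx
    obtain ⟨k, hk, h0⟩ := h3 n _ hx
    refine ⟨k, hk, (hb k).1 ?_⟩
    rw [← eDel_nat, h0, map_zero]

/-- Dimension shifting for the vanishing of local cohomology. -/
lemma VanLC.shift {f : P →ₗ[A] Q} {g : Q →ₗ[A] R}
    (hf : Function.Injective f) (hg : Function.Surjective g) (h : Function.Exact f g)
    [Module.Injective A Q] (hQ : gam m Q = ⊥) (i : ℕ)
    (hL : VanLC m P (i+1)) : VanLC m R i := by
  have hb := fun n => eDel_bijective (A ⧸ m ^ n) hf hg h (subsingleton_hom_of_gam m hQ n) i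
  intro n x
  obtain ⟨k, hk, h0⟩ := hL n (eDel _ hf hg h i x)
  refine ⟨k, hk, (hb k).1 ?_⟩
  rw [← eDel_nat, h0, map_zero]

/-- Two colimits of the same sequential system are isomorphic. -/
lemma colimit_unique (G : ℕ → Type u) [∀ n, AddCommGroup (G n)] [∀ n, Module A (G n)]
    (t : ∀ n k : ℕ, n ≤ k → G n →ₗ[A] G k)
    {L L' : Type u} [AddCommGroup L] [Module A L] [AddCommGroup L'] [Module A L']
    (ι : ∀ n, G n →ₗ[A] L) (ι' : ∀ n, G n →ₗ[A] L')
    (h1 : ∀ n k (h : n ≤ k) x, ι k (t n k h x) = ι n x)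
    (h1' : ∀ n k (h : n ≤ k) x, ι' k (t n k h x) = ι' n x)
    (h2 : ∀ y, ∃ n x, ι n x = y) (h2' : ∀ y, ∃ n x, ι' n x = y)
    (h3 : ∀ n x, ι n x = 0 → ∃ k, ∃ h : n ≤ k, t n k h x = 0)
    (h3' : ∀ n x, ι' n x = 0 → ∃ k, ∃ h : n ≤ k, t n k h x = 0) : Nonempty (L ≃ₗ[A] L') := by
  have key : ∀ {L : Type u} [AddCommGroup L] [Module A L] (ι : ∀ n, G n →ₗ[A] L)
    (h1 : ∀ n k (h : n ≤ k) x, ι k (t n k h x) = ι n x)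
    (h2 : ∀ y, ∃ n x, ι n x = y)
    (h3 : ∀ n x, ι n x = 0 → ∃ k, ∃ h : n ≤ k, t n k h x = 0),
    Nonempty (Module.DirectLimit G t ≃ₗ[A] L) := by
    intro L _ _ ι h1 h2 h3
    refine ⟨LinearEquiv.ofBijective (Module.DirectLimit.lift A ℕ G t ι h1) ⟨?_, ?_⟩⟩
    · rw [injective_iff_map_eq_zero]
      intro z hz
      obtain ⟨n, x, rfl⟩ := Module.DirectLimit.exists_of z
      rw [Module.DirectLimit.lift_of] at hz
      obtain ⟨k, hk, h0⟩ := h3 n x hz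
      rw [← Module.DirectLimit.of_f (hij := hk), h0, map_zero]
    · intro y
      obtain ⟨n, x, rfl⟩ := h2 y
      exact ⟨Module.DirectLimit.of A ℕ G t n x, Module.DirectLimit.lift_of _ _ _⟩
  obtain ⟨e⟩ := key ι h1 h2 h3
  obtain ⟨e'⟩ := key ι' h1' h2' h3'
  exact ⟨e.symm.trans e'⟩

lemma eMap_eHom_symm (t : P →ₗ[A] Q) (x : Q →ₗ[A] M) :
    eMap M 0 t ((eHom (A := A)).symm x) = (eHom (A := A)).symm (x.comp t) :=
  Abelian.Ext.mk₀_comp_mk₀ (ModuleCat.ofHom t) (ModuleCat.ofHom x)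

/-- `H^0_m(M)` is the module of `m`-power torsion. -/
lemma IsLC.gam_equiv {L : Type u} [AddCommGroup L] [Module A L] (hL : IsLC m M 0 L) :
    Nonempty (L ≃ₗ[A] gam m M) := by
  obtain ⟨ι, h1, h2, h3⟩ := hL
  let ι' (n : ℕ) : EE A (A ⧸ m ^ n) M 0 →ₗ[A] gam m M :=
    { toFun x := ⟨eHom (A := A) x (Submodule.Quotient.mk 1), hom_mem_gam m n _ _⟩
      map_add' x y := by ext; simp
      map_smul' a x := by ext; simp }
  have hv : ∀ n x, (ι' n x : M) = eHom (A := A) x (Submodule.Quotient.mk 1) := fun _ _ => rfl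
  have h0 : ∀ n k (h : n ≤ k) x, ι' k (eMap M 0 (trMap m h) x) = ι' n x := by
    intro n k h x
    ext
    rw [hv, hv]
    obtain ⟨x, rfl⟩ := (eHom (A := A)).symm.surjective x
    rw [eMap_eHom_symm, LinearEquiv.apply_symm_apply, LinearEquiv.apply_symm_apply]
    rfl
  refine colimit_unique _ (fun n k h => eMap M 0 (trMap m h)) ι ι' h1 h0 h2 ?_ h3 ?_
  · rintro ⟨v, n, hn⟩
    refine ⟨n, (eHom (A := A)).symm (quotSpan hn), ?_⟩
    ext
    rw [hv, LinearEquiv.apply_symm_apply, quotSpan_mk, one_smul]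
  · intro n x hx
    refine ⟨n, le_rfl, ?_⟩
    have hx0 : x = 0 := by
      apply (eHom (A := A)).injective
      rw [map_zero]
      have : eHom (A := A) x (Submodule.Quotient.mk 1) = 0 := by rw [← hv, hx]; rfl
      ext
      simpa using this
    rw [hx0, map_zero]

end LC2

/-! ### From local cohomology to `Ext` of the residue field -/

section LC3
variable {A : Type u} [CommRing A] (m : Ideal A)

lemma injective_of_retract {J E : Type u} [AddCommGroup J] [Module A J] [AddCommGroup E]
    [Module A E] [Module.Injective A E] (s : J →ₗ[A] E) (p : E →ₗ[A] J) (h : ∀ x, p (s x) = x) :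
    Module.Injective A J := by
  refine ⟨fun X Y _ _ _ _ f hf g => ?_⟩
  obtain ⟨k, hk⟩ := Module.Injective.out f hf (s.comp g)
  exact ⟨p.comp k, fun x => by simp [hk, h]⟩

lemma exists_retraction {M : Type u} [AddCommGroup M] [Module A M] (P : Submodule A M)
    [Module.Injective A P] : ∃ ρ : M →ₗ[A] P, ∀ x : P, ρ x = x :=
  Module.Injective.out P.subtype P.injective_subtype LinearMap.id

/-- A map from a finitely generated module to the `m`-power torsion of `M` has its image killed by a
single power of `m`. -/
lemma gam_uniform {N M : Type u} [AddCommGroup N] [Module A N] [Module.Finite A N] [AddCommGroup M]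
    [Module A M] (f : N →ₗ[A] gam m M) : ∃ n, ∀ a ∈ m ^ n, ∀ x, a • f x = 0 := by
  obtain ⟨S, hS⟩ := Module.Finite.fg_top (R := A) (M := N)
  have h : ∀ x : N, ∃ n, ∀ a ∈ m ^ n, a • f x = 0 := fun x => by
    obtain ⟨n, hn⟩ := (f x).2
    exact ⟨n, fun a ha => Subtype.ext (hn a ha)⟩
  choose n hn using h
  refine ⟨S.sup n, fun a ha x => ?_⟩
  have hx : x ∈ Submodule.span A (S : Set N) := hS ▸ Submodule.mem_top
  induction hx using Submodule.span_induction with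
  | mem x h => exact hn x a (Ideal.pow_le_pow_right (Finset.le_sup h) ha)
  | zero => simp
  | add x y _ _ h1 h2 => rw [map_add, smul_add, h1, h2, add_zero]
  | smul b x _ h => rw [map_smul, smul_comm, h, smul_zero]

/-- The torsion submodule of an injective module is injective, by Baer's criterion and the
Artin–Rees lemma. -/
lemma gam_injective [IsNoetherianRing A] (E : Type u) [AddCommGroup E] [Module A E]
    [Module.Injective A E] : Module.Injective A (gam m E) := by
  refine Module.Baer.injective fun I g => ?_
  obtain ⟨n, hn⟩ := gam_uniform m g
  obtain ⟨k, hk⟩ := Ideal.exists_pow_inf_eq_pow_smul m (I : Submodule A A)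
  -- Artin–Rees: `m ^ (n + k) ∩ I ⊆ m ^ n I`, which `g` kills.
  have h0 : ∀ x : I, (x : A) ∈ m ^ (n + k) → g x = 0 := by
    intro x hx
    have h1 : (x : A) ∈ (m ^ (n + k) • ⊤ ⊓ I : Submodule A A) := ⟨by simpa using hx, x.2⟩
    rw [hk (n + k) (by lia), Nat.add_sub_cancel] at h1
    have h2 : ∀ y ∈ (m ^ n • (m ^ k • ⊤ ⊓ I) : Submodule A A), ∃ hy : y ∈ I, g ⟨y, hy⟩ = 0 := by
      intro y hy
      refine Submodule.smul_induction_on hy ?_ ?_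
      · intro a ha b hb
        refine ⟨I.smul_mem a hb.2, ?_⟩
        have : g ⟨a • b, I.smul_mem a hb.2⟩ = a • g ⟨b, hb.2⟩ := by rw [← map_smul]; rfl
        rw [this, hn a ha]
      · rintro x y ⟨hx, hx'⟩ ⟨hy, hy'⟩
        refine ⟨I.add_mem hx hy, ?_⟩
        have : g ⟨x + y, I.add_mem hx hy⟩ = g ⟨x, hx⟩ + g ⟨y, hy⟩ := by rw [← map_add]; rfl
        rw [this, hx', hy', add_zero]
    exact (h2 x h1).2
  -- Hence `g` factors through the image of `I` in `A / m ^ (n + k)`, and the extension of this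
  -- factorization to `A / m ^ (n + k)` given by injectivity of `E` takes torsion values.
  let f : I →ₗ[A] (A ⧸ m ^ (n + k)) := (Submodule.mkQ (m ^ (n+k))).comp I.subtype
  have hle : LinearMap.ker f ≤ LinearMap.ker ((gam m E).subtype.comp g) := by
    intro x hx
    have : (x : A) ∈ m ^ (n + k) := (Submodule.Quotient.mk_eq_zero _).1 hx
    rw [LinearMap.mem_ker, LinearMap.comp_apply, h0 x this, map_zero]
  obtain ⟨h, hh⟩ := Module.Injective.out ((LinearMap.ker f).liftQ f le_rfl)
    (LinearMap.ker_eq_bot.1 (Submodule.ker_liftQ_eq_bot _ _ _ le_rfl))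
    ((LinearMap.ker f).liftQ _ hle)
  refine ⟨(h.comp (Submodule.mkQ (m ^ (n+k)))).codRestrict (gam m E)
    (fun a => hom_mem_gam m _ h _), fun x hx => Subtype.ext ?_⟩
  exact hh (Submodule.Quotient.mk ⟨x, hx⟩)

/-- A module without `m`-power torsion embeds in an injective module without `m`-power torsion:
the torsion splits off its injective hull as an injective summand, and is discarded. -/
lemma exists_embedding [IsNoetherianRing A] (M : Type u) [AddCommGroup M] [Module A M]
    (hM : gam m M = ⊥) : ∃ (J : Type u) (_ : AddCommGroup J) (_ : Module A J) (f : M →ₗ[A] J),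
      Function.Injective f ∧ Module.Injective A J ∧ gam m J = ⊥ := by
  let E := Injective.under (ModuleCat.of A M)
  have : Injective (ModuleCat.of A E) := inferInstanceAs (Injective (Injective.under _))
  have : Module.Injective A E := Module.injective_module_of_injective_object A E
  let ι : M →ₗ[A] E := (Injective.ι (ModuleCat.of A M)).hom
  have hι : Function.Injective ι :=
    (ModuleCat.mono_iff_injective (Injective.ι (ModuleCat.of A M))).1 inferInstance
  have := gam_injective m E
  obtain ⟨ρ, hρ⟩ := exists_retraction (gam m E)
  let π : E →ₗ[A] E := LinearMap.id - (gam m E).subtype.comp ρ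
  have hπ : ∀ x, π x ∈ LinearMap.ker ρ := by
    intro x
    rw [LinearMap.mem_ker]
    show ρ (x - ρ x) = 0
    rw [map_sub, hρ, sub_self]
  let p : E →ₗ[A] LinearMap.ker ρ := π.codRestrict _ hπ
  refine ⟨LinearMap.ker ρ, inferInstance, inferInstance, p.comp ι, ?_, ?_, ?_⟩
  · rw [injective_iff_map_eq_zero]
    intro v hv
    have h1 : ι v - ρ (ι v) = 0 := congrArg Subtype.val hv
    obtain ⟨n, hn⟩ := (ρ (ι v)).2
    have : v ∈ gam m M := ⟨n, fun a ha => hι (by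
      rw [map_smul, map_zero, sub_eq_zero.1 h1, hn a ha])⟩
    rwa [hM, Submodule.mem_bot] at this
  · refine injective_of_retract (LinearMap.ker ρ).subtype p fun x => Subtype.ext ?_
    show (x : E) - ρ x = x
    rw [LinearMap.mem_ker.1 x.2]; simp
  · rw [eq_bot_iff]
    rintro ⟨v, hv⟩ ⟨n, hn⟩
    have : v ∈ gam m E := ⟨n, fun a ha => congrArg Subtype.val (hn a ha)⟩
    have h2 := hρ ⟨v, this⟩
    rw [show ρ v = 0 from hv] at h2
    exact (Submodule.mem_bot A).2 (Subtype.ext (congrArg Subtype.val h2).symm)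

/-- If all local cohomology of `Q` vanishes, so does `Ext^i(A / m, Q)`. -/
lemma acyclic [IsNoetherianRing A] (i : ℕ) : ∀ (Q : Type u) [AddCommGroup Q] [Module A Q],
    gam m Q = ⊥ → (∀ i, 0 < i → VanLC m Q i) → Subsingleton (EE A (A ⧸ m) Q i) := by
  induction i with
  | zero =>
    intro Q _ _ h _
    have := subsingleton_hom_of_gam' m h
    exact (eHom (A := A)).toEquiv.subsingleton
  | succ i ih =>
    intro Q _ _ h hQ
    obtain ⟨J, _, _, f, hf, _, hJ⟩ := exists_embedding m Q h
    have hex : Function.Exact f (LinearMap.range f).mkQ := LinearMap.exact_map_mkQ_range f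
    have hs := Submodule.mkQ_surjective (LinearMap.range f)
    have hv := fun i => VanLC.shift m hf hs hex hJ i (hQ (i+1) (by lia))
    have h1 := ih (J ⧸ LinearMap.range f) (gam_eq_bot_of_van m (hv 0)) (fun i _ => hv i)
    exact (eDel_bijective (A ⧸ m) hf hs hex (subsingleton_hom_of_gam' m hJ) i).2.subsingleton

/-- If the local cohomology of `M` is concentrated in degree `j` and injective there, then
`Ext^i(A / m, M)` is concentrated in degree `j`. -/
lemma ext_vanish_of_lc [IsNoetherianRing A] (j : ℕ) :
    ∀ (M : Type u) [AddCommGroup M] [Module A M], (∀ i, i ≠ j → VanLC m M i) →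
    (∃ (L : Type u) (_ : AddCommGroup L) (_ : Module A L), IsLC m M j L ∧ Module.Injective A L) →
    ∀ i, i ≠ j → Subsingleton (EE A (A ⧸ m) M i) := by
  induction j with
  | zero =>
    rintro M _ _ hM ⟨L, _, _, hL, _⟩ i hi
    -- The torsion of `M` is injective, so `M` is its direct sum with `ker ρ`, all of whose local
    -- cohomology vanishes.
    obtain ⟨e⟩ := hL.gam_equiv
    have : Module.Injective A (gam m M) :=
      injective_of_retract e.symm.toLinearMap e.toLinearMap (fun x => by simp)
    obtain ⟨ρ, hρ⟩ := exists_retraction (gam m M)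
    let π : M →ₗ[A] M := LinearMap.id - (gam m M).subtype.comp ρ
    have hπ : ∀ x, π x ∈ LinearMap.ker ρ := by
      intro x
      rw [LinearMap.mem_ker]
      show ρ (x - ρ x) = 0
      rw [map_sub, hρ, sub_self]
    let p : M →ₗ[A] LinearMap.ker ρ := π.codRestrict _ hπ
    have hps : p.comp (LinearMap.ker ρ).subtype = LinearMap.id := by
      ext x
      show (x : M) - ρ x = x
      rw [LinearMap.mem_ker.1 x.2]; simp
    have hker : gam m (LinearMap.ker ρ) = ⊥ := by
      rw [eq_bot_iff]
      rintro ⟨v, hv⟩ ⟨n, hn⟩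
      have : v ∈ gam m M := ⟨n, fun a ha => congrArg Subtype.val (hn a ha)⟩
      have h2 := hρ ⟨v, this⟩
      rw [show ρ v = 0 from hv] at h2
      exact (Submodule.mem_bot A).2 (Subtype.ext (congrArg Subtype.val h2).symm)
    have h1 := acyclic m i (LinearMap.ker ρ) hker
      (fun i hi => (hM i hi.ne').summand m _ p hps)
    obtain ⟨i, rfl⟩ := Nat.exists_eq_succ_of_ne_zero hi
    have h2 := subsingleton_ext_of_injective (A := A) (P := A ⧸ m) (Y := gam m M) i
    refine subsingleton_of_forall_eq 0 fun x => ?_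
    obtain ⟨y, rfl⟩ := ((les_cov (A ⧸ m) (LinearMap.ker ρ).subtype ρ
      (Submodule.injective_subtype _) (fun x => ⟨x, hρ x⟩) (LinearMap.exact_subtype_ker_map ρ)
      (i+1)).1 x).1 (Subsingleton.elim _ _)
    rw [Subsingleton.elim y 0, map_zero]
  | succ j ih =>
    rintro M _ _ hM ⟨L, _, _, hL, hLi⟩ i hi
    have hg := gam_eq_bot_of_van m (hM 0 (by lia))
    obtain ⟨J, _, _, f, hf, _, hJ⟩ := exists_embedding m M hg
    have hex : Function.Exact f (LinearMap.range f).mkQ := LinearMap.exact_map_mkQ_range f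
    have hs := Submodule.mkQ_surjective (LinearMap.range f)
    rcases i with _ | i
    · have := subsingleton_hom_of_gam' m hg
      exact (eHom (A := A)).toEquiv.subsingleton
    have := ih (J ⧸ LinearMap.range f)
      (fun i hi => VanLC.shift m hf hs hex hJ i (hM (i+1) (by lia)))
      ⟨L, _, _, hL.shift m hf hs hex hJ, hLi⟩ i (by lia)
    exact (eDel_bijective (A ⧸ m) hf hs hex (subsingleton_hom_of_gam' m hJ) i).2.subsingleton

end LC3

/-! ### Cyclic modules and modules of finite length -/

section Sequences
variable {A : Type u} [CommRing A]
variable {P Q R Y : Type u} [AddCommGroup P] [Module A P] [AddCommGroup Q] [Module A Q]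
  [AddCommGroup R] [Module A R] [AddCommGroup Y] [Module A Y]

/-- If `Ext^i` vanishes on both ends of a short exact sequence, it vanishes on the middle term. -/
lemma ext_mid {f : P →ₗ[A] Q} {g : Q →ₗ[A] R} (hf : Function.Injective f)
    (hg : Function.Surjective g) (h : Function.Exact f g) (i : ℕ) (h1 : Subsingleton (EE A P Y i))
    (h2 : Subsingleton (EE A R Y i)) : Subsingleton (EE A Q Y i) := by
  refine subsingleton_of_forall_eq 0 fun x => ?_
  obtain ⟨y, rfl⟩ := ((les_contra Y f g hf hg h i).1 x).1 (Subsingleton.elim _ _)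
  rw [Subsingleton.elim y 0, map_zero]

lemma eMap_surj_of {f : P →ₗ[A] Q} {g : Q →ₗ[A] R} (hf : Function.Injective f)
    (hg : Function.Surjective g) (h : Function.Exact f g) (i : ℕ)
    (h1 : Subsingleton (EE A R Y (i + 1))) : Function.Surjective (eMap Y i f) := by
  obtain ⟨δ, h2, h3⟩ := (les_contra Y f g hf hg h i).2
  exact fun x => (h2 x).1 (Subsingleton.elim _ _)

lemma eMap_inj_of {f : P →ₗ[A] Q} {g : Q →ₗ[A] R} (hf : Function.Injective f)
    (hg : Function.Surjective g) (h : Function.Exact f g) (i : ℕ)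
    (h1 : ∀ e, e + 1 = i → Subsingleton (EE A P Y e)) : Function.Injective (eMap Y i g) := by
  rcases i with _ | i
  · exact eMap_zero_injective g hg
  obtain ⟨δ, h2, h3⟩ := (les_contra Y f g hf hg h i).2
  rw [injective_iff_map_eq_zero]
  intro x hx
  obtain ⟨y, rfl⟩ := (h3 x).1 hx
  have := h1 i rfl
  rw [Subsingleton.elim y 0, map_zero]

/-- The quotient `P / x P`. -/
abbrev QQ (x : A) (P : Type u) [AddCommGroup P] [Module A P] : Type u :=
  P ⧸ LinearMap.range (LinearMap.lsmul A P x)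

lemma mul_inj {x : A} (hx : IsSMulRegular P x) : Function.Injective (LinearMap.lsmul A P x) := hx

lemma mul_exact (x : A) : Function.Exact (LinearMap.lsmul A P x)
    (LinearMap.range (LinearMap.lsmul A P x)).mkQ := LinearMap.exact_map_mkQ_range _

lemma mul_surj (x : A) : Function.Surjective (LinearMap.range (LinearMap.lsmul A P x)).mkQ :=
  Submodule.mkQ_surjective _

lemma eMap_lsmul' (i : ℕ) (a : A) : eMap Y i (LinearMap.lsmul A P a) =
    LinearMap.lsmul A (EE A P Y i) a := by
  ext1 x; exact eMap_lsmul i a x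

lemma eCov_lsmul' (i : ℕ) (a : A) : eCov Y i (LinearMap.lsmul A P a) =
    LinearMap.lsmul A (EE A Y P i) a := by
  ext1 x; exact eCov_lsmul i a x

/-- Multiplication by `y` as a map `A / (J : y) → A / J`. -/
def colonMap (J : Ideal A) (y : A) :
    (A ⧸ Submodule.comap (LinearMap.lsmul A A y) J) →ₗ[A] A ⧸ J :=
  Submodule.mapQ _ J (LinearMap.lsmul A A y) le_rfl

lemma colonMap_injective (J : Ideal A) (y : A) : Function.Injective (colonMap J y) := by
  rw [← LinearMap.ker_eq_bot]
  exact Submodule.ker_liftQ_eq_bot _ _ _ (by rw [LinearMap.ker_comp, Submodule.ker_mkQ])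

/-- The projection `A / J → A / K`. -/
def factMap {J K : Ideal A} (h : J ≤ K) : (A ⧸ J) →ₗ[A] A ⧸ K :=
  Submodule.mapQ J K LinearMap.id h

lemma factMap_surjective {J K : Ideal A} (h : J ≤ K) : Function.Surjective (factMap h) := by
  intro x
  obtain ⟨x, rfl⟩ := Submodule.Quotient.mk_surjective _ x
  exact ⟨Submodule.Quotient.mk x, rfl⟩

lemma colon_exact (J : Ideal A) (y : A) : Function.Exact (colonMap J y)
    (factMap (le_sup_left : J ≤ J ⊔ Ideal.span {y})) := by
  intro z
  obtain ⟨z, rfl⟩ := Submodule.Quotient.mk_surjective _ z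
  constructor
  · intro h
    have h1 : z ∈ J ⊔ Ideal.span {y} := (Submodule.Quotient.mk_eq_zero _).1 h
    obtain ⟨a, ha, b, hb, rfl⟩ := Submodule.mem_sup.1 h1
    obtain ⟨c, rfl⟩ := Ideal.mem_span_singleton'.1 hb
    refine ⟨Submodule.Quotient.mk c, ?_⟩
    show Submodule.Quotient.mk (y • c) = _
    rw [Submodule.Quotient.eq, smul_eq_mul, mul_comm c y]
    simpa using ha
  · rintro ⟨c, hc⟩
    obtain ⟨c, rfl⟩ := Submodule.Quotient.mk_surjective _ c
    rw [← hc]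
    refine (Submodule.Quotient.mk_eq_zero _).2 (Ideal.mem_sup_right ?_)
    exact Ideal.mem_span_singleton'.2 ⟨c, mul_comm _ _⟩

/-- For a nonzerodivisor `x` on `A / J`, the sequence `0 → A/J → A/J → A/(J + x) → 0`. -/
lemma regular_exact (J : Ideal A) (x : A) : Function.Exact (LinearMap.lsmul A (A ⧸ J) x)
    (factMap (le_sup_left : J ≤ J ⊔ Ideal.span {x})) := by
  intro z
  rw [colon_exact J x z]
  constructor
  · rintro ⟨c, hc⟩
    obtain ⟨c, rfl⟩ := Submodule.Quotient.mk_surjective _ c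
    exact ⟨Submodule.Quotient.mk c, hc⟩
  · rintro ⟨c, hc⟩
    obtain ⟨c, rfl⟩ := Submodule.Quotient.mk_surjective _ c
    exact ⟨Submodule.Quotient.mk c, hc⟩

end Sequences

section Local
variable {A : Type u} [CommRing A] [IsLocalRing A]
open IsLocalRing

/-- The residue field, as an `A`-module. -/
abbrev kk (A : Type u) [CommRing A] [IsLocalRing A] : Type u := A ⧸ maximalIdeal A

lemma kk_smul {a : A} (ha : a ∈ maximalIdeal A) (v : kk A) : a • v = 0 := by
  obtain ⟨v, rfl⟩ := Submodule.Quotient.mk_surjective _ v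
  exact (Submodule.Quotient.mk_eq_zero _).2 (Ideal.mul_mem_right _ _ ha)

/-- Nakayama's lemma. -/
lemma nak_le {V : Type u} [AddCommGroup V] [Module A V] {N N' : Submodule A V}
    (hfg : N'.FG) (h : N' ≤ N ⊔ maximalIdeal A • N') : N' ≤ N :=
  Submodule.le_of_le_smul_of_le_jacobson_bot hfg (maximalIdeal_le_jacobson _) h

/-- Nakayama's lemma for multiplication by a single element. -/
lemma nak_sub {V : Type u} [AddCommGroup V] [Module A V] [Module.Finite A V] {x : A}
    (hx : x ∈ maximalIdeal A) (h : Function.Surjective (LinearMap.lsmul A V x)) :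
    Subsingleton V := by
  have : (⊤ : Submodule A V) ≤ ⊥ := nak_le Module.Finite.fg_top (fun v _ => by
    obtain ⟨w, rfl⟩ := h v
    exact Submodule.mem_sup_right (Submodule.smul_mem_smul hx Submodule.mem_top))
  refine subsingleton_of_forall_eq 0 fun v => ?_
  simpa using this (Submodule.mem_top (x := v))

instance kk_simple : IsSimpleModule A (kk A) :=
  isSimpleModule_iff_quot_maximal.2 ⟨_, inferInstance, ⟨LinearEquiv.refl _ _⟩⟩

/-- A finitely generated module killed by the maximal ideal is a finite power of the
residue field. -/
lemma exists_equiv_pi (V : Type u) [AddCommGroup V] [Module A V] [Module.Finite A V]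
    (hV : ∀ a ∈ maximalIdeal A, ∀ v : V, a • v = 0) :
    ∃ d : ℕ, Nonempty (V ≃ₗ[A] (Fin d → kk A)) ∧ Module.length A V = d := by
  have ht : Module.IsTorsionBySet A V (maximalIdeal A) := fun v a => hV a a.2 v
  let _ : Field (A ⧸ maximalIdeal A) := Ideal.Quotient.field _
  let _ := ht.module
  have : IsScalarTower A (A ⧸ maximalIdeal A) V := ht.isScalarTower
  have : Module.Finite (A ⧸ maximalIdeal A) V := Module.Finite.of_restrictScalars_finite A _ _
  let e := (Module.finBasis (A ⧸ maximalIdeal A) V).equivFun.restrictScalars A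
  refine ⟨_, ⟨e⟩, ?_⟩
  rw [e.length_eq, Module.length_pi_of_fintype]
  simp

variable {M : Type u} [AddCommGroup M] [Module A M]

/-- If `Ext^i(k, M)` is concentrated in degree `j`, so is `Ext^i(P, M)` for `P` of finite
length, and `Ext^j(-, M)` multiplies lengths by that of `Ext^j(k, M)`. -/
lemma ext_finite_length (j : ℕ) (h : ∀ i, i ≠ j → Subsingleton (EE A (kk A) M i))
    (P : Type u) [AddCommGroup P] [Module A P] (hP : IsFiniteLength A P) :
    (∀ i, i ≠ j → Subsingleton (EE A P M i)) ∧
    Module.length A (EE A P M j) = Module.length A (EE A (kk A) M j) * Module.length A P := by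
  induction hP with
  | @of_subsingleton P _ _ _ =>
    have h0 := fun i => subsingleton_ext_of_subsingleton (A := A) (P := P) (Y := M) i
    refine ⟨fun i _ => h0 i, ?_⟩
    have := h0 j
    rw [Module.length_eq_zero (M := EE A P M j), Module.length_eq_zero (M := P), mul_zero]
  | @of_simple_quotient P _ _ N hs hN ih =>
    obtain ⟨I, hI, ⟨e⟩⟩ := isSimpleModule_iff_quot_maximal.1 hs
    obtain rfl := eq_maximalIdeal hI
    have hq : ∀ i, i ≠ j → Subsingleton (EE A (P ⧸ N) M i) := fun i hi =>
      have := h i hi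
      (eCongr e i).symm.toEquiv.subsingleton
    have hex := LinearMap.exact_subtype_mkQ N
    refine ⟨fun i hi => ext_mid N.injective_subtype N.mkQ_surjective hex i (ih.1 i hi) (hq i hi),
      ?_⟩
    rw [Module.length_eq_add_of_exact (eMap M j N.mkQ) (eMap M j N.subtype)
      (eMap_inj_of N.injective_subtype N.mkQ_surjective hex j fun e he => ih.1 e (by lia))
      (eMap_surj_of N.injective_subtype N.mkQ_surjective hex j (hq _ (by lia)))
      (les_contra M N.subtype N.mkQ N.injective_subtype N.mkQ_surjective hex j).1, ih.2,
      ← (eCongr e j).length_eq, Module.length_eq_add_of_exact N.subtype N.mkQ N.injective_subtype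
        N.mkQ_surjective hex, Module.length_eq_one A (P ⧸ N), mul_add, mul_one, add_comm]

variable [IsNoetherianRing A]

/-- Noetherian induction on the ideals `J` of a local ring. For `J` strictly inside the maximal
ideal and `y` in the maximal ideal but not in `J`, either `(J : y)` is strictly larger than `J` or
`y` is a nonzerodivisor on `A / J`. -/
lemma ideal_induction {p : Ideal A → Prop} (top : p ⊤) (max : p (maximalIdeal A))
    (split : ∀ J y, p (Submodule.comap (LinearMap.lsmul A A y) J) → p (J ⊔ Ideal.span {y}) → p J)
    (reg : ∀ J y, J ≠ ⊤ → y ∈ maximalIdeal A → IsSMulRegular (A ⧸ J) y →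
      p (J ⊔ Ideal.span {y}) → p J) : ∀ J, p J := by
  refine IsNoetherian.induction fun J ih => ?_
  by_cases hJ : J = ⊤
  · rwa [hJ]
  have hle := le_maximalIdeal hJ
  by_cases hm : J = maximalIdeal A
  · rwa [hm]
  obtain ⟨y, hy, hyJ⟩ := Set.exists_of_ssubset (lt_of_le_of_ne hle fun h => hm (SetLike.coe_injective h))
  have h1 : p (J ⊔ Ideal.span {y}) := ih _ (lt_of_le_of_ne le_sup_left fun h => hyJ (by
    rw [SetLike.mem_coe, h]; exact Ideal.mem_sup_right (Ideal.mem_span_singleton_self y)))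
  by_cases hK : Submodule.comap (LinearMap.lsmul A A y) J = J
  · refine reg J y hJ hy ?_ h1
    intro a b hab
    rw [← sub_eq_zero] at hab ⊢
    replace hab : y • (a - b) = 0 := by rw [smul_sub]; exact hab
    generalize a - b = c at *
    obtain ⟨c, rfl⟩ := Submodule.Quotient.mk_surjective _ c
    refine (Submodule.Quotient.mk_eq_zero _).2 ?_
    rw [← hK]
    exact (Submodule.Quotient.mk_eq_zero J).1 hab
  · refine split J y (ih _ (lt_of_le_of_ne ?_ (Ne.symm hK))) h1
    intro a ha
    exact Ideal.mul_mem_left _ _ ha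

variable [Module.Finite A M]

/-- Vanishing of `Ext^i(k, M)` for `i ≥ i₀` propagates to all cyclic modules. -/
lemma ext_cyclic_vanish (i₀ : ℕ) (h : ∀ i, i₀ ≤ i → Subsingleton (EE A (kk A) M i)) (J : Ideal A) :
    ∀ i, i₀ ≤ i → Subsingleton (EE A (A ⧸ J) M i) := by
  induction J using ideal_induction with
  | top =>
    intro i _
    have : Subsingleton (A ⧸ (⊤ : Ideal A)) := Submodule.Quotient.subsingleton_iff.2 rfl
    exact subsingleton_ext_of_subsingleton i
  | max => exact h
  | split J y h1 h2 =>
    exact fun i hi => ext_mid (colonMap_injective J y) (factMap_surjective _) (colon_exact J y) i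
      (h1 i hi) (h2 i hi)
  | reg J y _ hy hr h1 =>
    intro i hi
    refine nak_sub hy ?_
    rw [← eMap_lsmul']
    exact eMap_surj_of (mul_inj hr) (factMap_surjective _) (regular_exact J y) i (h1 _ (by lia))

end Local

/-! ### Reduction modulo a regular sequence -/

section QuotBot
variable {A : Type u} [CommRing A] {M : Type u} [AddCommGroup M] [Module A M]

lemma ext_quot_bot_zero : Nonempty (M ≃ₗ[A] EE A (A ⧸ (⊥ : Ideal A)) M 0) :=
  ⟨((eCongr (Submodule.quotEquivOfEqBot (⊥ : Ideal A) rfl) 0).symm.trans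
    ((eHom (A := A)).trans (LinearMap.ringLmapEquivSelf A A M))).symm⟩

lemma ext_quot_bot {i : ℕ} (hi : i ≠ 0) : Subsingleton (EE A (A ⧸ (⊥ : Ideal A)) M i) := by
  obtain ⟨i, rfl⟩ := Nat.exists_eq_succ_of_ne_zero hi
  have := subsingleton_ext_of_projective (A := A) (P := A) (Y := M) i
  exact (eCongr (Submodule.quotEquivOfEqBot (⊥ : Ideal A) rfl) (i+1)).symm.toEquiv.subsingleton

end QuotBot

section StageSection
open IsLocalRing
variable {A : Type u} [CommRing A] [IsLocalRing A]

/-- The module `M` has `Ext^i(k, M)` concentrated in degree `j`, where `k` is the residue field. -/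
def Conc (j : ℕ) (M : Type u) [AddCommGroup M] [Module A M] : Prop :=
  ∀ i, i ≠ j → Subsingleton (EE A (kk A) M i)

/-- The length of `Ext^j(k, M)`. -/
noncomputable def rk (j : ℕ) (M : Type u) [AddCommGroup M] [Module A M] : ℕ∞ :=
  Module.length A (EE A (kk A) M j)

/-- The situation after dividing `M` by a sequence of length `s` which is regular on `A` and on
`M`: the ideal `I` stands for the one generated by the sequence, and `N` for `M / I M`. Since `A / I`
is resolved by the Koszul complex of the sequence, `Ext^i(A / I, M)` is concentrated in degree `s`,
where it is `N`; and `Ext^i(P, N)` is `Ext^(i + s)(P, M)` when `I` kills `P`. The fields record the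
consequences of these facts which the induction uses. The last one, `Ext^s(A / I, M') ≠ 0`, serves
only to show that `M` and `M'` have the same degree of concentration. -/
structure Stage (j : ℕ) (M M' : Type u) [AddCommGroup M] [Module A M] [AddCommGroup M']
    [Module A M'] (s : ℕ) (I : Ideal A) (N : Type u) [AddCommGroup N] [Module A N] : Prop where
  fin : Module.Finite A N
  ext_quot : ∀ i, i ≠ s → Subsingleton (EE A (A ⧸ I) M i)
  ext_quot_equiv : Nonempty (N ≃ₗ[A] EE A (A ⧸ I) M s)
  ext_res : ∀ i, i + s < j → Subsingleton (EE A (kk A) N i)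
  ext_res_length : ∀ i, i + s = j → Module.length A (EE A (kk A) N i) = rk (A := A) j M
  grade : ∀ (P : Type u) [AddCommGroup P] [Module A P], (∀ a ∈ I, ∀ v : P, a • v = 0) →
    ∀ e, (∀ i, i < e → Subsingleton (EE A P N i)) → ∀ i, i < e + s → Subsingleton (EE A P M i)
  nonzero : ¬ Subsingleton (EE A (A ⧸ I) M' s)

variable {M M' N : Type u} [AddCommGroup M] [Module A M] [AddCommGroup M']
    [Module A M'] [AddCommGroup N] [Module A N]

/-- The initial stage is given by the empty sequence. -/
lemma Stage.start [Module.Finite A M] [Nontrivial M'] {j : ℕ} (hM : Conc (A := A) j M) :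
    Stage (A := A) j M M' 0 ⊥ M where
  fin := inferInstance
  ext_quot i hi := ext_quot_bot hi
  ext_quot_equiv := ext_quot_bot_zero
  ext_res i hi := hM i (by lia)
  ext_res_length i hi := by rw [add_zero] at hi; subst hi; rfl
  grade P _ _ _ e h := h
  nonzero h := by
    obtain ⟨e⟩ := ext_quot_bot_zero (A := A) (M := M')
    exact not_subsingleton M' e.toEquiv.subsingleton

variable [IsNoetherianRing A]

/-- If all `Ext^i(k, M)` vanished, then so would `Hom(A, M) = M`. -/
lemma rk_ne_zero [Module.Finite A M] [Nontrivial M] {j : ℕ} (hM : Conc (A := A) j M) :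
    ¬ Subsingleton (EE A (kk A) M j) := by
  intro h
  have h1 : ∀ i, 0 ≤ i → Subsingleton (EE A (kk A) M i) := fun i _ => by
    by_cases hi : i = j
    · exact hi ▸ h
    · exact hM i hi
  obtain ⟨e⟩ := ext_quot_bot_zero (A := A) (M := M)
  have := ext_cyclic_vanish 0 h1 ⊥ 0 le_rfl
  exact not_subsingleton M e.toEquiv.subsingleton

/-- At a stage before the last there is an element of the maximal ideal regular on `A / I` and
on `N`. Otherwise, the residue field `k` would embed in `(A / I) × N`. It does not embed in `N` since
`Hom(k, N) = 0`. If it embedded in `A / I`, then `Ext^j(A / I, M) = 0` would surject onto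
`Ext^j(k, M) ≠ 0`, as `M` has injective dimension `j`. -/
lemma Stage.exists_regular [Module.Finite A M] [Nontrivial M] {j : ℕ} (hM : Conc (A := A) j M)
    {s : ℕ} {I : Ideal A} (S : Stage j M M' s I N) (hs : s < j) :
    ∃ x ∈ maximalIdeal A, IsSMulRegular (A ⧸ I) x ∧ IsSMulRegular N x := by
  have := S.fin
  have hN : Subsingleton (kk A →ₗ[A] N) := by
    have := S.ext_res 0 (by lia)
    exact (eHom (A := A)).symm.toEquiv.subsingleton
  have hA : Subsingleton (kk A →ₗ[A] A ⧸ I) := by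
    by_contra hns
    rw [not_subsingleton_iff_nontrivial] at hns
    obtain ⟨f, hf⟩ := exists_ne (0 : kk A →ₗ[A] A ⧸ I)
    obtain ⟨y, hy⟩ := Submodule.Quotient.mk_surjective _ (f (Submodule.Quotient.mk 1))
    have hK : maximalIdeal A = Submodule.comap (LinearMap.lsmul A A y) I := by
      refine (maximalIdeal.isMaximal A).eq_of_le ?_ ?_
      · intro h
        apply hf
        ext
        have h1 : (1 : A) ∈ Submodule.comap (LinearMap.lsmul A A y) I := by rw [h]; trivial
        have h2 : y • (1 : A) ∈ I := h1
        show f (Submodule.Quotient.mk 1) = 0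
        rw [← hy]
        exact (Submodule.Quotient.mk_eq_zero _).2 (by simpa using h2)
      · intro a ha
        show y • a ∈ I
        rw [← Submodule.Quotient.mk_eq_zero I, smul_eq_mul, mul_comm, ← smul_eq_mul,
          Submodule.Quotient.mk_smul, hy, ← map_smul, kk_smul ha, map_zero]
    have h1 := ext_cyclic_vanish (M := M) (j + 1) (fun i hi => hM i (by lia))
      (I ⊔ Ideal.span {y}) (j + 1) le_rfl
    have h2 := eMap_surj_of (colonMap_injective I y) (factMap_surjective _) (colon_exact I y) j h1
    have := S.ext_quot j (by lia)
    have h3 := h2.subsingleton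
    rw [← hK] at h3
    exact rk_ne_zero hM h3
  have hprod : Subsingleton (kk A →ₗ[A] (A ⧸ I) × N) := by
    refine subsingleton_of_forall_eq 0 fun f => LinearMap.ext fun v => Prod.ext ?_ ?_
    · exact LinearMap.congr_fun (Subsingleton.elim ((LinearMap.fst A _ _).comp f) 0) v
    · exact LinearMap.congr_fun (Subsingleton.elim ((LinearMap.snd A _ _).comp f) 0) v
  obtain ⟨x, hx, hr⟩ := IsSMulRegular.subsingleton_linearMap_iff.1 hprod
  rw [Ideal.annihilator_quotient] at hx
  refine ⟨x, hx, fun a b hab => ?_, fun a b hab => ?_⟩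
  · exact congrArg Prod.fst (hr (a₁ := (a, 0)) (a₂ := (b, 0)) (Prod.ext hab rfl))
  · exact congrArg Prod.snd (hr (a₁ := (0, a)) (a₂ := (0, b)) (Prod.ext rfl hab))

/-- Dividing by one more regular element. The long exact sequences of multiplication by `x` on
`A / I` and on `N` break into short ones because `x` kills `A / (I + x)` and the residue field. -/
lemma Stage.step [Module.Finite A M'] {j : ℕ} {s : ℕ} {I : Ideal A} (S : Stage j M M' s I N)
    {x : A} (hx : x ∈ maximalIdeal A) (hI : IsSMulRegular (A ⧸ I) x) (hN : IsSMulRegular N x) :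
    Stage j M M' (s + 1) (I ⊔ Ideal.span {x}) (QQ x N) := by
  have := S.fin
  have hxI : x ∈ I ⊔ Ideal.span {x} := Ideal.mem_sup_right (Ideal.mem_span_singleton_self x)
  have hsurj := factMap_surjective (le_sup_left : I ≤ I ⊔ Ideal.span {x})
  have hex := regular_exact I x
  have hz : ∀ i (z : EE A (A ⧸ (I ⊔ Ideal.span {x})) M i), eMap M i (factMap le_sup_left) z = 0 := by
    intro i z
    have h1 : x • eMap M i (factMap (le_sup_left : I ≤ I ⊔ Ideal.span {x})) z = 0 := by
      rw [← map_smul, ext_smul_eq_zero_left, map_zero]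
      intro p
      obtain ⟨p, rfl⟩ := Submodule.Quotient.mk_surjective _ p
      exact (Submodule.Quotient.mk_eq_zero _).2 (Ideal.mul_mem_right _ _ hxI)
    by_cases hi : i = s
    · subst hi
      obtain ⟨e⟩ := S.ext_quot_equiv
      apply e.symm.injective
      apply hN
      simp only [← map_smul, h1, map_zero, smul_zero]
    · have := S.ext_quot i hi
      exact Subsingleton.elim _ _
  have hk : ∀ i (z : EE A (kk A) N i), eCov (kk A) i (LinearMap.lsmul A N x) z = 0 := by
    intro i z
    rw [eCov_lsmul]
    exact ext_smul_eq_zero_left (fun p => kk_smul hx p) i z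
  refine ⟨inferInstance, ?_, ?_, ?_, ?_, ?_, ?_⟩
  · intro i hi
    refine subsingleton_of_forall_eq 0 fun z => ?_
    refine eMap_inj_of (mul_inj hI) hsurj hex i (fun e he => S.ext_quot e (by lia)) ?_
    rw [hz, map_zero]
  · obtain ⟨δ, h1, h2⟩ := (les_contra M _ _ (mul_inj hI) hsurj hex s).2
    obtain ⟨e⟩ := S.ext_quot_equiv
    have hd : Function.Surjective (δ.comp e.toLinearMap) := fun z => by
      obtain ⟨y, rfl⟩ := (h2 z).1 (hz _ z)
      exact ⟨e.symm y, by simp⟩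
    refine ⟨(Submodule.quotEquivOfEq _ _ ?_).trans (LinearMap.quotKerEquivOfSurjective _ hd)⟩
    ext v
    rw [LinearMap.mem_ker, LinearMap.comp_apply, LinearEquiv.coe_coe, h1, eMap_lsmul']
    constructor
    · rintro ⟨w, rfl⟩
      exact ⟨e w, by simp⟩
    · rintro ⟨w, hw⟩
      exact ⟨e.symm w, e.injective (by simpa using hw)⟩
  · intro i hi
    obtain ⟨h0, δ, h1, h2⟩ := les_cov (kk A) _ _ (mul_inj hN) (mul_surj x) (mul_exact x) i
    have a1 := S.ext_res i (by lia)
    have a2 := S.ext_res (i + 1) (by lia)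
    refine subsingleton_of_forall_eq 0 fun z => ?_
    obtain ⟨y, rfl⟩ := (h1 z).1 (Subsingleton.elim _ _)
    rw [Subsingleton.elim y 0, map_zero]
  · intro i hi
    obtain ⟨h0, δ, h1, h2⟩ := les_cov (kk A) _ _ (mul_inj hN) (mul_surj x) (mul_exact x) i
    have a1 := S.ext_res i (by lia)
    rw [← S.ext_res_length (i + 1) (by lia)]
    refine LinearEquiv.length_eq (LinearEquiv.ofBijective δ ⟨?_, fun z => (h2 z).1 (hk _ z)⟩)
    rw [injective_iff_map_eq_zero]
    intro z hz
    obtain ⟨y, rfl⟩ := (h1 z).1 hz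
    rw [Subsingleton.elim y 0, map_zero]
  · intro P _ _ hP e he i hi
    refine S.grade P (fun a ha => hP a (Ideal.mem_sup_left ha)) (e + 1) ?_ i (by lia)
    have hP0 : ∀ i (z : EE A P N i), eCov P i (LinearMap.lsmul A N x) z = 0 := by
      intro i z
      rw [eCov_lsmul]
      exact ext_smul_eq_zero_left (hP x hxI) i z
    intro i hi
    refine subsingleton_of_forall_eq 0 fun z => ?_
    rcases i with _ | i
    · exact eCov_zero_injective _ (mul_inj hN) ((hP0 0 z).trans (map_zero _).symm)
    · obtain ⟨h0, δ, h1, h2⟩ := les_cov P _ _ (mul_inj hN) (mul_surj x) (mul_exact x) i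
      obtain ⟨y, rfl⟩ := (h2 z).1 (hP0 _ z)
      have := he i (by lia)
      rw [Subsingleton.elim y 0, map_zero]
  · intro h
    have h1 := eMap_surj_of (mul_inj hI) hsurj hex s h
    rw [eMap_lsmul'] at h1
    exact S.nonzero (nak_sub hx h1)

/-- At the last stage, `A / I` has finite length. By induction on the ideals `J ⊇ I`, the problem is
to exclude that `A / J` has a nonzerodivisor `y` in the maximal ideal with `A / (J + y)` of finite
length. In that case `Ext^j(A / J, M) = 0` by Nakayama's lemma and `Ext^(j - 1)(A / J, M) = 0` since
`I` kills `A / J`, so that `Ext^j(A / (J + y), M) = 0`, which contradicts the length formula. -/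
lemma Stage.finite_length [Module.Finite A M] [Nontrivial M] {j : ℕ} (hM : Conc (A := A) j M)
    {I : Ideal A} (S : Stage j M M' j I N) : IsFiniteLength A (A ⧸ I) := by
  rw [← Module.length_ne_top_iff]
  suffices h : ∀ J : Ideal A, I ≤ J → Module.length A (A ⧸ J) ≠ ⊤ from h I le_rfl
  intro J
  induction J using ideal_induction with
  | top =>
    intro _
    have : Subsingleton (A ⧸ (⊤ : Ideal A)) := Submodule.Quotient.subsingleton_iff.2 rfl
    simp
  | max =>
    intro _
    rw [Module.length_eq_one A (kk A)]; simp
  | split J y h1 h2 =>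
    intro hJ
    rw [Module.length_eq_add_of_exact _ _ (colonMap_injective J y) (factMap_surjective _)
      (colon_exact J y)]
    refine WithTop.add_ne_top.2 ⟨h1 fun a ha => hJ (Ideal.mul_mem_left _ _ ha),
      h2 (hJ.trans le_sup_left)⟩
  | reg J y hne hy hr h1 =>
    intro hJ
    exfalso
    have h2 := h1 (hJ.trans le_sup_left)
    have hv := ext_finite_length j hM _ (Module.length_ne_top_iff.1 h2)
    have hs : Function.Surjective (eMap M j (LinearMap.lsmul A (A ⧸ J) y)) :=
      eMap_surj_of (mul_inj hr) (factMap_surjective _) (regular_exact J y) j (hv.1 _ (by lia))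
    rw [eMap_lsmul'] at hs
    have h3 := nak_sub hy hs
    have h4 : ∀ e, e + 1 = j → Subsingleton (EE A (A ⧸ J) M e) := fun e he => by
      refine S.grade (A ⧸ J) ?_ 0 (fun i hi => absurd hi (by lia)) e (by lia)
      intro a ha v
      obtain ⟨v, rfl⟩ := Submodule.Quotient.mk_surjective _ v
      exact (Submodule.Quotient.mk_eq_zero _).2 (Ideal.mul_mem_right _ _ (hJ ha))
    have h5 := (eMap_inj_of (Y := M) (mul_inj hr) (factMap_surjective _) (regular_exact J y) j
      h4).subsingleton
    have h6 := hv.2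
    rw [Module.length_eq_zero (M := EE A (A ⧸ (J ⊔ Ideal.span {y})) M j), eq_comm, mul_eq_zero,
      Module.length_eq_zero_iff, Module.length_eq_zero_iff] at h6
    rcases h6 with h6 | h6
    · exact rk_ne_zero hM h6
    · rw [Submodule.Quotient.subsingleton_iff] at h6
      have : J ⊔ Ideal.span {y} ≤ maximalIdeal A :=
        sup_le (le_maximalIdeal hne) ((Ideal.span_singleton_le_iff_mem _).2 hy)
      rw [h6, top_le_iff] at this
      exact (maximalIdeal.isMaximal A).ne_top this

end StageSection

/-! ### The last stage and the descent along the sequence -/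

section Final
open IsLocalRing
variable {A : Type u} [CommRing A]

lemma eMap_sum {P Q Y : Type u} [AddCommGroup P] [Module A P] [AddCommGroup Q] [Module A Q]
    [AddCommGroup Y] [Module A Y] (i : ℕ) {ι : Type*} (t : Finset ι) (f : ι → P →ₗ[A] Q)
    (x : EE A Q Y i) : eMap Y i (∑ a ∈ t, f a) x = ∑ a ∈ t, eMap Y i (f a) x := by
  classical
  induction t using Finset.induction_on with
  | empty => simp [eMap]
  | insert a t ha ih => rw [Finset.sum_insert ha, Finset.sum_insert ha, eMap_add, ih]

lemma injective_of_length_eq {V W : Type u} [AddCommGroup V] [Module A V] [AddCommGroup W]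
    [Module A W] (f : V →ₗ[A] W) (hf : Function.Surjective f)
    (h : Module.length A V = Module.length A W) (hW : Module.length A W ≠ ⊤) :
    Function.Injective f := by
  have h1 := Module.length_eq_add_of_exact (LinearMap.ker f).subtype f
    (Submodule.injective_subtype _) hf (LinearMap.exact_subtype_ker_map f)
  rw [h] at h1
  have h2 : Module.length A (LinearMap.ker f) = 0 := by
    have : 0 + Module.length A W = Module.length A (LinearMap.ker f) + Module.length A W := by
      rw [← h1, zero_add]
    exact ((WithTop.add_right_inj hW).1 this).symm
  rw [Module.length_eq_zero_iff] at h2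
  exact LinearMap.ker_eq_bot.1 (Submodule.subsingleton_iff_eq_bot.1 h2)

lemma pres_smul {n : ℕ} {I : Ideal A} {V : Type u} [AddCommGroup V] [Module A V]
    (hV : ∀ a ∈ I, ∀ v : V, a • v = 0) (φ : (Fin n → A) →ₗ[A] V) {v : Fin n → A}
    (hv : ∀ i, v i ∈ I) : φ v = 0 := by
  rw [LinearMap.pi_apply_eq_sum_univ φ v]
  exact Finset.sum_eq_zero fun i _ => hV _ (hv i) _

variable [IsLocalRing A]

/-- The module `Ext^i(N, M')` vanishes for `i ≠ s` and is isomorphic to `(A / I) ^ n` for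
`i = s`; the isomorphism is recorded as a surjection from `A ^ n` with kernel `I ^ n`. -/
structure Concl (n s : ℕ) (I : Ideal A) (N M' : Type u) [AddCommGroup N] [Module A N]
    [AddCommGroup M'] [Module A M'] : Prop where
  vanish : ∀ i, i ≠ s → Subsingleton (EE A N M' i)
  pres : ∃ φ : (Fin n → A) →ₗ[A] EE A N M' s, Function.Surjective φ ∧
    ∀ v, φ v = 0 ↔ ∀ i, v i ∈ I

variable {M M' N : Type u} [AddCommGroup M] [Module A M] [AddCommGroup M']
    [Module A M'] [AddCommGroup N] [Module A N]

/-- The ideal `I` kills `N = Ext^s(A / I, M)`. -/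
lemma Stage.ideal_smul {j s : ℕ} {I : Ideal A} (S : Stage j M M' s I N) {a : A} (ha : a ∈ I)
    (v : N) : a • v = 0 := by
  obtain ⟨e⟩ := S.ext_quot_equiv
  apply e.injective
  rw [map_smul, map_zero]
  refine ext_smul_eq_zero_left (fun p => ?_) s _
  obtain ⟨p, rfl⟩ := Submodule.Quotient.mk_surjective _ p
  exact (Submodule.Quotient.mk_eq_zero _).2 (Ideal.mul_mem_right _ _ ha)

variable [IsNoetherianRing A]

/-- With `S` the socle of a module `N` of finite length, the kernel of the restriction
`Ext^j(N, M') → Ext^j(S, M')` lies in `m Ext^j(N, M')`. Indeed, generators `y_1, …, y_t` of the maximal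
ideal embed `N / S` in `N ^ t`, and `Ext^j(-, M')` turns this embedding into a surjection. Thus the
kernel, which comes from `Ext^j(N / S, M')`, consists of sums of multiples of the `y_i`. -/
lemma socle_ker [Module.Finite A M'] {j : ℕ} (hM' : Conc (A := A) j M') (hN : IsFiniteLength A N)
    (S : Submodule A N) (hS : ∀ v, (∀ a ∈ maximalIdeal A, a • v = 0) → v ∈ S)
    (hS' : ∀ v ∈ S, ∀ a ∈ maximalIdeal A, a • v = 0)
    (z : EE A N M' j) (hz : eMap M' j S.subtype z = 0) :
    z ∈ maximalIdeal A • (⊤ : Submodule A (EE A N M' j)) := by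
  obtain ⟨t, y, hy⟩ := Submodule.fg_iff_exists_fin_generating_family.1
    (IsNoetherian.noetherian (maximalIdeal A))
  have hym : ∀ i, y i ∈ maximalIdeal A := fun i => hy ▸ Submodule.subset_span ⟨i, rfl⟩
  let μ₀ : N →ₗ[A] (Fin t → N) := LinearMap.pi fun i => LinearMap.lsmul A N (y i)
  have hker : S = LinearMap.ker μ₀ := by
    ext v
    constructor
    · intro hv
      ext i
      exact hS' v hv _ (hym i)
    · intro hv
      refine hS v fun a ha => ?_
      rw [← hy] at ha
      induction ha using Submodule.span_induction with
      | mem a h => obtain ⟨i, rfl⟩ := h; exact congrFun hv i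
      | zero => simp
      | add a b _ _ h1 h2 => rw [add_smul, h1, h2, add_zero]
      | smul a b _ h => rw [smul_assoc, h, smul_zero]
  let μ : (N ⧸ S) →ₗ[A] (Fin t → N) := S.liftQ μ₀ hker.le
  have hμ : Function.Injective μ :=
    LinearMap.ker_eq_bot.1 (Submodule.ker_liftQ_eq_bot _ _ _ hker.ge)
  have hpi : IsFiniteLength A (Fin t → N) := by
    rw [← Module.length_ne_top_iff] at hN ⊢
    rw [Module.length_pi_of_fintype, Ne, ENat.sum_eq_top]
    simpa using fun _ => hN
  have hcok := hpi.of_surjective (Submodule.mkQ_surjective (LinearMap.range μ))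
  have h1 := eMap_surj_of hμ (Submodule.mkQ_surjective (LinearMap.range μ))
    (LinearMap.exact_map_mkQ_range μ) j
    ((ext_finite_length j hM' _ hcok).1 (j + 1) (by lia))
  obtain ⟨w, rfl⟩ := ((les_contra M' _ _ S.injective_subtype S.mkQ_surjective
    (LinearMap.exact_subtype_mkQ S) j).1 z).1 hz
  obtain ⟨w, rfl⟩ := h1 w
  rw [← eMap_comp]
  have h2 : μ.comp S.mkQ = ∑ i, y i • LinearMap.single A (fun _ : Fin t => N) i := by
    ext v i
    simp [μ, μ₀, Pi.single_apply]
  rw [h2, eMap_sum]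
  refine Submodule.sum_mem _ fun i _ => ?_
  rw [eMap_smul]
  exact Submodule.smul_mem_smul (hym i) Submodule.mem_top

/-- The last stage. The module `N` has finite length `r · length(A / I)`, so that `Ext^j(N, M')` has
length `r' r · length(A / I)`. Its restriction to the socle `k ^ r` of `N` is `k ^ (r' r)`, and by
Nakayama's lemma a lift of a basis generates it. The resulting surjection from `(A / I) ^ (r' r)` is an
isomorphism as both sides have the same finite length. -/
lemma Stage.base [Module.Finite A M] [Nontrivial M] [Module.Finite A M'] {j j' : ℕ}
    (hM : Conc (A := A) j M) (hM' : Conc (A := A) j' M') {r r' : ℕ}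
    (hr : rk (A := A) j M = r) (hr' : rk (A := A) j' M' = r')
    {I : Ideal A} (S : Stage j M M' j I N) : Concl (r' * r) j I N M' := by
  have hI := S.finite_length hM
  -- If `j` and `j'` differed, then `Ext^j(A / I, M')` would vanish.
  obtain rfl : j = j' := by
    by_contra h
    exact S.nonzero ((ext_finite_length j' hM' _ hI).1 j h)
  have := S.fin
  have hlN : Module.length A N = r * Module.length A (A ⧸ I) := by
    obtain ⟨e⟩ := S.ext_quot_equiv
    rw [e.length_eq, (ext_finite_length j hM _ hI).2, ← hr]; rfl
  have hN : IsFiniteLength A N := by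
    rw [← Module.length_ne_top_iff] at hI ⊢
    rw [hlN]
    exact WithTop.mul_ne_top (ENat.natCast_ne_top r) hI
  have hT := ext_finite_length j hM' N hN
  let ev : (kk A →ₗ[A] N) →ₗ[A] N :=
    { toFun f := f (Submodule.Quotient.mk 1)
      map_add' _ _ := rfl
      map_smul' _ _ := rfl }
  have hev : Function.Injective ev := by
    intro f g h
    ext
    exact h
  -- The socle of `N` is the image of `Hom(k, N)`.
  let W := LinearMap.range ev
  have hW1 : ∀ v, (∀ a ∈ maximalIdeal A, a • v = 0) → v ∈ W := fun v hv =>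
    ⟨quotSpan hv, by show quotSpan hv (Submodule.Quotient.mk 1) = v; rw [quotSpan_mk, one_smul]⟩
  have hW2 : ∀ v ∈ W, ∀ a ∈ maximalIdeal A, a • v = 0 := by
    rintro _ ⟨f, rfl⟩ a ha
    show a • f _ = 0
    rw [← map_smul, kk_smul ha, map_zero]
  have hlW : Module.length A W = r := by
    rw [← (LinearEquiv.ofInjective ev hev).length_eq, ← (eHom (A := A)).length_eq,
      S.ext_res_length 0 (zero_add j), hr]
  have hWf : IsFiniteLength A W := hN.of_injective W.injective_subtype
  have hres : Function.Surjective (eMap M' j W.subtype) :=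
    eMap_surj_of W.injective_subtype W.mkQ_surjective (LinearMap.exact_subtype_mkQ W) j
      ((ext_finite_length j hM' _ (hN.of_surjective W.mkQ_surjective)).1 (j + 1) (by lia))
  obtain ⟨d, ⟨e⟩, hd⟩ := exists_equiv_pi (EE A W M' j) fun a ha v =>
    ext_smul_eq_zero_left (fun p => Subtype.ext (hW2 p p.2 a ha)) j v
  obtain rfl : d = r' * r := by
    rw [(ext_finite_length j hM' _ hWf).2, hlW] at hd
    have h2 : (r' : ℕ∞) * r = d := by rw [← hd, ← hr']; rfl
    exact_mod_cast h2.symm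
  let π (J : Ideal A) : (Fin (r' * r) → A) →ₗ[A] (Fin (r' * r) → A ⧸ J) :=
    LinearMap.pi fun i => (Submodule.mkQ J).comp (LinearMap.proj i)
  have hπ : ∀ J, Function.Surjective (π J) := fun J v => by
    choose w hw using fun i => Submodule.mkQ_surjective J (v i)
    exact ⟨w, funext hw⟩
  obtain ⟨φ, hφ⟩ := Module.projective_lifting_property (eMap M' j W.subtype)
    (e.symm.toLinearMap.comp (π (maximalIdeal A))) hres
  have hφs : Function.Surjective φ := by
    rw [← LinearMap.range_eq_top, ← top_le_iff]
    refine nak_le Module.Finite.fg_top fun z _ => ?_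
    obtain ⟨u, hu⟩ := (e.symm.surjective.comp (hπ (maximalIdeal A))) (eMap M' j W.subtype z)
    have h1 : eMap M' j W.subtype (z - φ u) = 0 := by
      rw [map_sub, sub_eq_zero, ← hu]
      exact (LinearMap.congr_fun hφ u).symm
    have h2 := socle_ker hM' hN W hW1 hW2 _ h1
    have h3 : z = φ u + (z - φ u) := by abel
    rw [h3]
    exact Submodule.add_mem_sup ⟨u, rfl⟩ h2
  refine ⟨hT.1, φ, hφs, ?_⟩
  have hle : LinearMap.ker (π I) ≤ LinearMap.ker φ := by
    intro v hv
    refine pres_smul (I := I) (fun a ha w => ?_) φ fun i => ?_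
    · exact ext_smul_eq_zero_left (fun p => S.ideal_smul ha p) j w
    · exact (Submodule.Quotient.mk_eq_zero I).1 (congrFun (LinearMap.mem_ker.1 hv) i)
  let ψ := (LinearMap.ker (π I)).liftQ φ hle
  have hψ : Function.Injective ψ := by
    refine injective_of_length_eq ψ ?_ ?_ ?_
    · intro z
      obtain ⟨u, rfl⟩ := hφs z
      exact ⟨Submodule.Quotient.mk u, rfl⟩
    · rw [((π I).quotKerEquivOfSurjective (hπ I)).length_eq, Module.length_pi_of_fintype, hT.2,
        hlN]
      have : Module.length A (EE A (kk A) M' j) = r' := hr'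
      rw [this]
      simp [mul_assoc]
    · rw [hT.2]
      refine WithTop.mul_ne_top ?_ (Module.length_ne_top_iff.2 hN)
      have : Module.length A (EE A (kk A) M' j) = r' := hr'
      rw [this]
      exact ENat.natCast_ne_top r'
  intro v
  constructor
  · intro hv i
    have h1 : (Submodule.Quotient.mk v : _ ⧸ LinearMap.ker (π I)) = 0 :=
      hψ ((show ψ (Submodule.Quotient.mk v) = 0 from hv).trans (map_zero ψ).symm)
    have h2 := (Submodule.Quotient.mk_eq_zero _).1 h1
    exact (Submodule.Quotient.mk_eq_zero I).1 (congrFun (LinearMap.mem_ker.1 h2) i)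
  · intro hv
    refine pres_smul (I := I) (fun a ha w => ?_) φ hv
    exact ext_smul_eq_zero_left (fun p => S.ideal_smul ha p) j w

/-- Descent along a regular element `x`. As `Ext^i(N / x N, M')` vanishes for `i ≠ s + 1`,
multiplication by `x` is injective on `Ext^s(N, M')` with cokernel `Ext^(s + 1)(N / x N, M')`. The
generators of the cokernel lift to generators of `Ext^s(N, M')` by Nakayama's lemma, and a second
application of that lemma, to the kernel of the lifted presentation, shows that no relations
appear besides those given by `I`. -/
lemma Concl.descend [Module.Finite A M'] [Module.Finite A N] {n s : ℕ} {I : Ideal A} {x : A}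
    (hx : x ∈ maximalIdeal A) (hN : IsSMulRegular N x) (hI : ∀ a ∈ I, ∀ v : N, a • v = 0)
    (C : Concl n (s + 1) (I ⊔ Ideal.span {x}) (QQ x N) M') : Concl n s I N M' := by
  obtain ⟨hv, φ', hφ', hker'⟩ := C
  refine ⟨fun i hi => ?_, ?_⟩
  · refine nak_sub hx ?_
    rw [← eMap_lsmul']
    exact eMap_surj_of (mul_inj hN) (mul_surj x) (mul_exact x) i (hv _ (by lia))
  obtain ⟨h0, δ, h1, h2⟩ := les_contra M' _ _ (mul_inj hN) (mul_surj x) (mul_exact x) s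
  have hxinj : ∀ z : EE A N M' s, x • z = 0 → z = 0 := by
    intro z hz
    rw [← eMap_lsmul] at hz
    obtain ⟨y, rfl⟩ := (h0 z).1 hz
    have := hv s (by lia)
    rw [Subsingleton.elim y 0, map_zero]
  have hδ : Function.Surjective δ := by
    intro z
    refine (h2 z).1 ?_
    have hz : ∀ p : QQ x N, x • p = 0 := by
      intro p
      obtain ⟨p, rfl⟩ := Submodule.Quotient.mk_surjective _ p
      exact (Submodule.Quotient.mk_eq_zero _).2 ⟨p, rfl⟩
    have : Subsingleton (EE A N M' (s + 1)) := by
      refine nak_sub hx ?_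
      rw [← eMap_lsmul']
      exact eMap_surj_of (mul_inj hN) (mul_surj x) (mul_exact x) (s + 1) (hv _ (by lia))
    exact Subsingleton.elim _ _
  obtain ⟨φ, hφ⟩ := Module.projective_lifting_property δ φ' hδ
  have hφ1 : ∀ v, δ (φ v) = φ' v := fun v => LinearMap.congr_fun hφ v
  refine ⟨φ, ?_, ?_⟩
  · rw [← LinearMap.range_eq_top, ← top_le_iff]
    refine nak_le Module.Finite.fg_top fun z _ => ?_
    obtain ⟨u, hu⟩ := hφ' (δ z)
    have h3 : δ (z - φ u) = 0 := by rw [map_sub, hφ1, hu, sub_self]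
    obtain ⟨w, hw⟩ := (h1 _).1 h3
    have h4 : z = φ u + x • w := by
      rw [← eMap_lsmul, hw]; abel
    rw [h4]
    exact Submodule.add_mem_sup ⟨u, rfl⟩ (Submodule.smul_mem_smul hx Submodule.mem_top)
  have hIφ : ∀ v : Fin n → A, (∀ i, v i ∈ I) → φ v = 0 := fun v hv =>
    pres_smul (I := I) (fun a ha w => ext_smul_eq_zero_left (hI a ha) s w) φ hv
  let IA : Submodule A (Fin n → A) := Submodule.pi Set.univ fun _ => I
  have hIA : ∀ v, v ∈ IA ↔ ∀ i, v i ∈ I := fun v => by simp [IA]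
  have hK : LinearMap.ker φ ≤ IA := by
    refine nak_le (IsNoetherian.noetherian _) fun v hv => ?_
    have h3 : φ' v = 0 := by rw [← hφ1, LinearMap.mem_ker.1 hv, map_zero]
    have h4 : ∀ i, ∃ a ∈ I, ∃ b, v i = a + x * b := fun i => by
      obtain ⟨a, ha, b, hb, h⟩ := Submodule.mem_sup.1 ((hker' v).1 h3 i)
      obtain ⟨c, rfl⟩ := Ideal.mem_span_singleton'.1 hb
      exact ⟨a, ha, c, by rw [← h, mul_comm]⟩
    choose a ha b hb using h4
    have h5 : v = a + x • b := funext hb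
    have h6 : φ b = 0 := by
      apply hxinj
      rw [← map_smul]
      have := LinearMap.mem_ker.1 hv
      rwa [h5, map_add, hIφ a ha, zero_add] at this
    rw [h5]
    exact Submodule.add_mem_sup ((hIA a).2 ha) (Submodule.smul_mem_smul hx h6)
  exact fun v => ⟨fun h => (hIA v).1 (hK h), hIφ v⟩

/-- Descending induction on the length `s` of the regular sequence, with `s + t = j`. -/
lemma Stage.concl [Module.Finite A M] [Nontrivial M] [Module.Finite A M'] {j j' : ℕ}
    (hM : Conc (A := A) j M) (hM' : Conc (A := A) j' M') {r r' : ℕ}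
    (hr : rk (A := A) j M = r) (hr' : rk (A := A) j' M' = r') (t : ℕ) :
    ∀ (s : ℕ) (I : Ideal A) (N : Type u) [AddCommGroup N] [Module A N], Stage j M M' s I N →
      s + t = j → Concl (r' * r) s I N M' := by
  induction t with
  | zero =>
    intro s I N _ _ S h
    obtain rfl : s = j := h
    exact S.base hM hM' hr hr'
  | succ t ih =>
    intro s I N _ _ S h
    obtain ⟨x, hx, h1, h2⟩ := S.exists_regular hM (by lia)
    have := S.fin
    exact (ih (s + 1) _ _ (S.step hx h1 h2) (by lia)).descend hx h2
      (fun a ha v => S.ideal_smul ha v)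

lemma exists_rk [Module.Finite A M] [Nontrivial M] {j : ℕ} (hM : Conc (A := A) j M) :
    ∃ r : ℕ, 0 < r ∧ rk (A := A) j M = r := by
  obtain ⟨d, -, hd⟩ := exists_equiv_pi (EE A (kk A) M j)
    fun a ha v => ext_smul_eq_zero_left (kk_smul ha) j v
  refine ⟨d, Nat.pos_of_ne_zero ?_, hd⟩
  rintro rfl
  exact rk_ne_zero hM (Module.length_eq_zero_iff.1 (by simpa using hd))

/-- At the empty sequence, `I = 0` and `N = M`. -/
lemma main_conc [Module.Finite A M] [Nontrivial M] [Module.Finite A M'] [Nontrivial M'] {j j' : ℕ}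
    (hM : Conc (A := A) j M) (hM' : Conc (A := A) j' M') {r r' : ℕ}
    (hr : rk (A := A) j M = r) (hr' : rk (A := A) j' M' = r') :
    (∀ i, 0 < i → Subsingleton (EE A M M' i)) ∧
    Nonempty ((M →ₗ[A] M') ≃ₗ[A] (Fin (r' * r) → A)) := by
  obtain ⟨hv, φ, hφ, hk⟩ := Stage.concl hM hM' hr hr' j 0 ⊥ M (Stage.start hM) (zero_add j)
  refine ⟨fun i hi => hv i hi.ne', ?_⟩
  refine ⟨((LinearEquiv.ofBijective φ ⟨?_, hφ⟩).trans (eHom (A := A))).symm⟩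
  rw [injective_iff_map_eq_zero]
  exact fun v h => funext fun i => (Submodule.mem_bot A).1 ((hk v).1 h i)

lemma conc_of_lc {M : Type u} [AddCommGroup M] [Module A M] (j : ℕ)
    (hvanish : ∀ i : ℕ, i ≠ j →
      Subsingleton ↥((localCohomology (maximalIdeal A) i).obj (ModuleCat.of A M)))
    (hinj : Module.Injective A
      ↥((localCohomology (maximalIdeal A) j).obj (ModuleCat.of A M))) : Conc (A := A) j M :=
  ext_vanish_of_lc (maximalIdeal A) j M
    (fun i hi =>
      have := hvanish i hi
      (isLC_localCohomology (maximalIdeal A) M i).van)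
    ⟨_, _, _, isLC_localCohomology (maximalIdeal A) M j, hinj⟩

end Final

theorem statement9 (A : Type u) [CommRing A] [IsNoetherianRing A] [IsLocalRing A]
    [IsAdicComplete (IsLocalRing.maximalIdeal A) A]
    (M : Type u) [AddCommGroup M] [Module A M] [Module.Finite A M] [Nontrivial M]
    (M' : Type u) [AddCommGroup M'] [Module A M'] [Module.Finite A M'] [Nontrivial M']
    (j : ℕ)
    (hvanish : ∀ i : ℕ, i ≠ j →
      Subsingleton ↥((localCohomology (IsLocalRing.maximalIdeal A) i).obj (ModuleCat.of A M)))
    (hinj : Module.Injective A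
      ↥((localCohomology (IsLocalRing.maximalIdeal A) j).obj (ModuleCat.of A M)))
    (j' : ℕ)
    (hvanish' : ∀ i : ℕ, i ≠ j' →
      Subsingleton ↥((localCohomology (IsLocalRing.maximalIdeal A) i).obj (ModuleCat.of A M')))
    (hinj' : Module.Injective A
      ↥((localCohomology (IsLocalRing.maximalIdeal A) j').obj (ModuleCat.of A M'))) :
    (∀ i : ℕ, 0 < i → extVanishes A M M' i) ∧
      (∃ n : ℕ, 0 < n ∧ Nonempty ((M →ₗ[A] M') ≃ₗ[A] (Fin n → A))) ∧
      (∃ r : ℕ, 1 ≤ r ∧ Nonempty ((M →ₗ[A] M) ≃ₗ[A] (Fin (r * r) → A))) := by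
  have hM := conc_of_lc j hvanish hinj
  have hM' := conc_of_lc j' hvanish' hinj'
  obtain ⟨r, hr0, hr⟩ := exists_rk hM
  obtain ⟨r', hr0', hr'⟩ := exists_rk hM'
  obtain ⟨h1, h2⟩ := main_conc hM hM' hr hr'
  refine ⟨fun i hi => ?_, ⟨r' * r, Nat.mul_pos hr0' hr0, h2⟩, r, hr0, (main_conc hM hM hr hr).2⟩
  have := h1 i hi
  exact (oldNew i (ModuleCat.of A M) (ModuleCat.of A M')).toEquiv.subsingleton
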